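/- Let n ≥ 2, let 1 ≤ k ≤ n−1, and let f₁, f₂ ∈ Q₀ⁿ. Assume the Milman condition: ‖P_H f₁‖_{L¹(H)} ≤ ∫_H f₂ dλ_H for every k-dimensional linear subspace H ⊆ ℝⁿ. Assume further that f₂ is centered (∫_{ℝⁿ} x f₂(x) dx = 0) and that M > 0 is such that L_g ≤ M for every g ∈ Q₀^{n−k}. Then ‖f₁‖_{n/k} ≤ (M / L_{f₂})^{n−k} · ‖f₂‖₁^{k/n} · ‖f₂‖_∞^{(n−k)/n}. -/

import Mathlib

open MeasureTheory

noncomputable section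

/-- `ℝⁿ` with its Euclidean structure. -/
abbrev Eucl (n : ℕ) := EuclideanSpace ℝ (Fin n)

/-- `f : ℝⁿ → [0,∞)` is log-concave:
`f(tx+(1−t)y) ≥ f(x)^t · f(y)^(1−t)` for all `x, y` and `t ∈ (0,1)`. -/
def IsLogConcave {n : ℕ} (f : Eucl n → ℝ) : Prop :=
  ∀ x y : Eucl n, ∀ t : ℝ, 0 < t → t < 1 →
    f x ^ t * f y ^ (1 - t) ≤ f (t • x + (1 - t) • y)

/-- The class `Q₀ⁿ`: nonnegative, log-concave, upper semicontinuous, integrable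
functions with positive integral. -/
def MemQ0 {n : ℕ} (f : Eucl n → ℝ) : Prop :=
  (∀ x, 0 ≤ f x) ∧ IsLogConcave f ∧ UpperSemicontinuous f ∧
    Integrable f ∧ 0 < ∫ x, f x

/-- `‖f‖_∞ = sup f`. -/
def supNorm {n : ℕ} (f : Eucl n → ℝ) : ℝ := ⨆ x, f x

/-- `‖f‖_p = (∫ f^p)^(1/p)`. -/
def lpNorm {n : ℕ} (p : ℝ) (f : Eucl n → ℝ) : ℝ := (∫ x, f x ^ p) ^ (1 / p)

/-- `‖P_H f‖_{L¹(H)} = ∫_H sup_{z ∈ H⊥} f(y+z) dλ_H(y)`, the `L¹(H)`-norm of the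
projection of `f` onto the subspace `H` (with the Lebesgue measure on `H` induced
by the Euclidean structure). -/
def projL1 {n : ℕ} (f : Eucl n → ℝ) (H : Submodule ℝ (Eucl n)) : ℝ :=
  ∫ y : H, ⨆ z : Hᗮ, f ((y : Eucl n) + (z : Eucl n))

/-- `‖S_H f‖_{L¹(H)} = ∫_H f dλ_H`, the integral of the section `f|_H`. -/
def sectL1 {n : ℕ} (f : Eucl n → ℝ) (H : Submodule ℝ (Eucl n)) : ℝ :=
  ∫ y : H, f (y : Eucl n)

/-- The covariance matrix of the probability measure `‖g‖₁⁻¹ g(x) dx`: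
`Cov(g)_{ij} = ‖g‖₁⁻¹ ∫ xᵢxⱼ g − bᵢbⱼ` with barycenter `b = ‖g‖₁⁻¹ ∫ x g(x) dx`. -/
def covMatrix {d : ℕ} (g : Eucl d → ℝ) : Matrix (Fin d) (Fin d) ℝ :=
  Matrix.of fun i j =>
    (∫ x, g x * x i * x j) / (∫ x, g x) -
      ((∫ x, g x * x i) / ∫ x, g x) * ((∫ x, g x * x j) / ∫ x, g x)

/-- The isotropic constant `L_g = (‖g‖_∞/‖g‖₁)^{1/d} · (det Cov(g))^{1/(2d)}`. -/
def isoConst {d : ℕ} (g : Eucl d → ℝ) : ℝ :=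
  (supNorm g / ∫ x, g x) ^ ((1 : ℝ) / d) *
    (covMatrix g).det ^ (1 / (2 * (d : ℝ)))

/-!
Let `v` be an orthonormal eigenbasis of the covariance matrix of `f₂`, with eigenvalues `λᵢ`. The
`n` cyclic intervals of `k` consecutive basis vectors span `k`-dimensional subspaces `Hⱼ` that cover
every basis vector exactly `k` times, so Finner's (Loomis-Whitney type) inequality, applied to
`f₁ ≤ P_{Hⱼ} f₁`, gives `∫ f₁^{n/k} ≤ ∏ⱼ ‖P_{Hⱼ} f₁‖₁^{1/k}`. The Milman condition replaces the
projections by the sections `∫_{Hⱼ} f₂`. Such a section is the value at `0` of the marginal of `f₂`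
on `Hⱼᗮ`, which is again in the class `Q₀` by Prékopa-Leindler and whose covariance determinant is
the product of the complementary `λᵢ`; hence it is at most
`Mⁿ⁻ᵏ ‖f₂‖₁ / ∏ᵢ λᵢ^{1/2}`. Multiplying over `j`, every `λᵢ` occurs `n - k` times, and the
determinant of the covariance of `f₂` reassembles into `L_{f₂}`.
-/

section Finner

theorem lintegral_prod_rpow_le_of_const {α ι : Type*} [MeasurableSpace α] {μ : Measure α}
    [Fintype ι] [DecidableEq ι] {J : Finset ι} {p : ι → ℝ} (hp : ∀ j ∈ J, 0 ≤ p j)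
    (hsum : ∑ j ∈ J, p j = 1) {G : ι → α → ENNReal} (hG : ∀ j ∈ J, Measurable (G j))
    {c : ι → ENNReal} (hc : ∀ j ∉ J, ∀ a, G j a = c j) :
    ∫⁻ a, ∏ j, G j a ^ p j ∂μ ≤ (∏ j ∈ J, (∫⁻ a, G j a ∂μ) ^ p j) * ∏ j ∈ Jᶜ, c j ^ p j := by
  have hsplit (a : α) :
      ∏ j, G j a ^ p j = (∏ j ∈ J, G j a ^ p j) * ∏ j ∈ Jᶜ, c j ^ p j := by
    rw [← Finset.prod_mul_prod_compl J]
    congr 1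
    exact Finset.prod_congr rfl fun j hj => by rw [hc j (Finset.mem_compl.mp hj)]
  simp only [hsplit]
  rw [lintegral_mul_const _ (Finset.measurable_fun_prod _ fun j hj => (hG j hj).pow_const _)]
  gcongr
  exact ENNReal.lintegral_prod_norm_pow_le J (fun j hj => (hG j hj).aemeasurable) hsum hp

variable {δ ι : Type*} [DecidableEq δ] [Fintype ι] {π : δ → Type*} [∀ i, MeasurableSpace (π i)]
  {μ : ∀ i, Measure (π i)}

theorem lmarginal_update_of_dependsOn {g : (∀ i, π i) → ENNReal} {I : Set δ}
    (hg : DependsOn g I) (s : Finset δ) {i : δ} (hi : i ∉ I) (x : ∀ i, π i) (a : π i) :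
    lmarginal μ s g (Function.update x i a) = lmarginal μ s g x := by
  refine lintegral_congr fun y => hg fun l hl => ?_
  have hli : l ≠ i := fun h => hi (h ▸ hl)
  simp [Function.updateFinset, hli]

theorem lmarginal_prod_rpow_le [∀ i, SigmaFinite (μ i)] {I : ι → Finset δ}
    {g : ι → (∀ i, π i) → ENNReal} (hg : ∀ j, Measurable (g j))
    (hdep : ∀ j, DependsOn (g j) (I j : Set δ)) {p : ι → ℝ} (hp : ∀ j, 0 ≤ p j)
    (hcover : ∀ i, ∑ j with i ∈ I j, p j = 1) (s : Finset δ) (x : ∀ i, π i) :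
    lmarginal μ s (fun x => ∏ j, g j x ^ p j) x ≤
      ∏ j, lmarginal μ (s ∩ I j) (g j) x ^ p j := by
  classical
  induction s using Finset.induction generalizing x with
  | empty => simp
  | insert i s hi ih =>
    set J : Finset ι := {j | i ∈ I j} with hJ
    have hinsert : ∀ j ∈ J, lmarginal μ (insert i s ∩ I j) (g j) x =
        ∫⁻ a, lmarginal μ (s ∩ I j) (g j) (Function.update x i a) ∂μ i := fun j hj => by
      rw [Finset.insert_inter_of_mem (by simpa [hJ] using hj),
        lmarginal_insert _ (hg j) (by simp [hi])]
    have hskip : ∀ j ∈ Jᶜ, lmarginal μ (insert i s ∩ I j) (g j) x =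
        lmarginal μ (s ∩ I j) (g j) x := fun j hj => by
      rw [Finset.insert_inter_of_notMem (by simpa [hJ] using hj)]
    calc lmarginal μ (insert i s) (fun x => ∏ j, g j x ^ p j) x
        = ∫⁻ a, lmarginal μ s (fun x => ∏ j, g j x ^ p j) (Function.update x i a) ∂μ i :=
          lmarginal_insert _ (Finset.measurable_fun_prod _ fun j _ => (hg j).pow_const _) hi x
      _ ≤ ∫⁻ a, ∏ j, lmarginal μ (s ∩ I j) (g j) (Function.update x i a) ^ p j ∂μ i :=
          lintegral_mono fun a => ih _
      _ ≤ (∏ j ∈ J, (∫⁻ a, lmarginal μ (s ∩ I j) (g j) (Function.update x i a) ∂μ i) ^ p j) *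
            ∏ j ∈ Jᶜ, lmarginal μ (s ∩ I j) (g j) x ^ p j :=
          lintegral_prod_rpow_le_of_const (fun j _ => hp j) (hcover i)
            (fun j _ => ((hg j).lmarginal _).comp (measurable_update x)) fun j hj a =>
              lmarginal_update_of_dependsOn (hdep j) _ (by simpa [hJ] using hj) x a
      _ = ∏ j, lmarginal μ (insert i s ∩ I j) (g j) x ^ p j := by
          rw [← Finset.prod_mul_prod_compl J]
          congr 1
          · exact Finset.prod_congr rfl fun j hj => by rw [hinsert j hj]
          · exact Finset.prod_congr rfl fun j hj => by rw [hskip j hj]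

theorem lintegral_prod_comp_rpow_le [Fintype δ] {κ E : Type*} [Fintype κ] [MeasurableSpace E]
    {μ : Measure E} [SigmaFinite μ] {e : ι → κ → δ}
    (he : ∀ j, Function.Injective (e j)) {g : ι → (κ → E) → ENNReal}
    (hg : ∀ j, Measurable (g j)) {p : ι → ℝ} (hp : ∀ j, 0 ≤ p j)
    (hcover : ∀ i, ∑ j with i ∈ Finset.univ.image (e j), p j = 1) :
    ∫⁻ x, ∏ j, g j (x ∘ e j) ^ p j ∂Measure.pi (fun _ : δ => μ) ≤
      ∏ j, (∫⁻ y, g j y ∂Measure.pi fun _ => μ) ^ p j := by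
  classical
  rcases isEmpty_or_nonempty (δ → E) with hE | ⟨⟨x⟩⟩
  · simp
  have hmarginal (j : ι) : lmarginal (fun _ => μ) (Finset.univ.image (e j))
      (fun x => g j (x ∘ e j)) x = ∫⁻ y, g j y ∂Measure.pi fun _ => μ :=
    (lmarginal_image (μ := fun _ : δ => μ) (he j) Finset.univ (hg j) x).trans
      (congrFun lmarginal_univ _)
  have hle := lmarginal_prod_rpow_le (μ := fun _ : δ => μ) (I := fun j => Finset.univ.image (e j))
    (g := fun j x => g j (x ∘ e j)) (fun j => (hg j).comp (by fun_prop))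
    (fun j x y hxy => congrArg (g j) (funext fun a => hxy _ (by simp))) hp hcover Finset.univ x
  simpa only [lmarginal_univ, Finset.univ_inter, hmarginal] using hle

end Finner

section PrekopaLeindler

open scoped Pointwise

theorem volume_add_volume_le_of_isCompact {A B : Set ℝ} (hA : IsCompact A) (hB : IsCompact B)
    (hAne : A.Nonempty) (hBne : B.Nonempty) : volume A + volume B ≤ volume (A + B) := by
  have hsup := hA.sSup_mem hAne
  have hinf := hB.sInf_mem hBne
  have hoverlap : (A + {sInf B}) ∩ ({sSup A} + B) ⊆ {sSup A + sInf B} := by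
    rintro _ ⟨⟨a, ha, _, rfl, rfl⟩, ⟨_, rfl, b, hb, hab⟩⟩
    have := le_csSup hA.bddAbove ha
    have := csInf_le hB.bddBelow hb
    simp only [Set.mem_singleton_iff] at hab ⊢
    linarith
  calc volume A + volume B = volume (A + {sInf B}) + volume ({sSup A} + B) := by
        simp only [Set.add_singleton, Set.singleton_add, Set.image_add_right, Set.image_add_left,
          measure_preimage_add, measure_preimage_add_right]
    _ = volume ((A + {sInf B}) ∪ ({sSup A} + B)) :=
        (measure_union₀ (isCompact_singleton.add hB).measurableSet.nullMeasurableSet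
          (measure_mono_null hoverlap (measure_singleton _))).symm
    _ ≤ volume (A + B) := measure_mono <| Set.union_subset
        (Set.add_subset_add_left (Set.singleton_subset_iff.mpr hinf))
        (Set.add_subset_add_right (Set.singleton_subset_iff.mpr hsup))

theorem volume_add_volume_le {A B : Set ℝ} (hA : MeasurableSet A) (hB : MeasurableSet B)
    (hAne : A.Nonempty) (hBne : B.Nonempty) : volume A + volume B ≤ volume (A + B) := by
  obtain ⟨a, ha⟩ := hAne
  obtain ⟨b, hb⟩ := hBne
  rw [hA.measure_eq_iSup_isCompact, hB.measure_eq_iSup_isCompact]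
  simp only [iSup_and']
  refine ENNReal.biSup_add_biSup_le' ⟨∅, by simp⟩ ⟨∅, by simp⟩ ?_
  rintro K ⟨hKA, hK⟩ L ⟨hLB, hL⟩
  calc volume K + volume L ≤ volume (insert a K) + volume (insert b L) := by
        gcongr <;> exact Set.subset_insert _ _
    _ ≤ volume (insert a K + insert b L) := volume_add_volume_le_of_isCompact (hK.insert a)
        (hL.insert b) (Set.insert_nonempty _ _) (Set.insert_nonempty _ _)
    _ ≤ volume (A + B) := measure_mono <| Set.add_subset_add (Set.insert_subset ha hKA)
        (Set.insert_subset hb hLB)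

theorem ofReal_mul_volume_add_le {A B : Set ℝ} (hA : MeasurableSet A) (hB : MeasurableSet B)
    (hAne : A.Nonempty) (hBne : B.Nonempty) {a b : ℝ} (ha : 0 ≤ a) (hb : 0 ≤ b) :
    ENNReal.ofReal a * volume A + ENNReal.ofReal b * volume B ≤ volume (a • A + b • B) := by
  simpa [Measure.addHaar_smul, abs_of_nonneg ha, abs_of_nonneg hb] using
    volume_add_volume_le (hA.const_smul₀ a) (hB.const_smul₀ b) hAne.smul_set hBne.smul_set

theorem lintegral_min_one_eq {α : Type*} [MeasurableSpace α] (μ : Measure α) {u : α → ENNReal}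
    (hu : Measurable u) :
    ∫⁻ x, min (u x) 1 ∂μ = ∫⁻ s in Set.Ioo (0 : ℝ) 1, μ {x | ENNReal.ofReal s < u x} := by
  have hfin (x : α) : min (u x) 1 ≠ ⊤ := (min_le_right _ _).trans_lt ENNReal.one_lt_top |>.ne
  have hlevel : ∀ s ∈ Set.Ioi (0 : ℝ), μ {x | s < (min (u x) 1).toReal} =
      (Set.Iio 1).indicator (fun s => μ {x | ENNReal.ofReal s < u x}) s := fun s hs => by
    simp only [← ENNReal.ofReal_lt_iff_lt_toReal (Set.mem_Ioi.mp hs).le (hfin _), lt_min_iff,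
      ENNReal.ofReal_lt_one, Set.indicator_apply, Set.mem_Iio]
    split_ifs with hs1 <;> simp [hs1]
  calc ∫⁻ x, min (u x) 1 ∂μ = ∫⁻ x, ENNReal.ofReal (min (u x) 1).toReal ∂μ := by
        simp only [ENNReal.ofReal_toReal (hfin _)]
    _ = ∫⁻ s in Set.Ioi 0, μ {x | s < (min (u x) 1).toReal} :=
        lintegral_eq_lintegral_meas_lt μ (ae_of_all _ fun _ => ENNReal.toReal_nonneg)
          (hu.min measurable_const).ennreal_toReal.aemeasurable
    _ = ∫⁻ s in Set.Ioi 0, (Set.Iio 1).indicator (fun s => μ {x | ENNReal.ofReal s < u x}) s :=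
        setLIntegral_congr_fun measurableSet_Ioi hlevel
    _ = ∫⁻ s in Set.Ioo (0 : ℝ) 1, μ {x | ENNReal.ofReal s < u x} := by
        rw [lintegral_indicator measurableSet_Iio, Measure.restrict_restrict measurableSet_Iio,
          Set.inter_comm, Set.Ioi_inter_Iio]

theorem ofReal_mul_volume_superlevel_add_le {u v w : ℝ → ENNReal} (hu : Measurable u)
    (hv : Measurable v) (hu1 : ⨆ x, u x = 1) (hv1 : ⨆ x, v x = 1)
    {a b : ℝ} (ha : 0 < a) (hb : 0 < b) (hab : a + b = 1)
    (h : ∀ x y, u x ^ a * v y ^ b ≤ w (a • x + b • y)) {s : ℝ} (hs0 : 0 < s) (hs1 : s < 1) :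
    ENNReal.ofReal a * volume {x | ENNReal.ofReal s < u x} +
      ENNReal.ofReal b * volume {x | ENNReal.ofReal s < v x} ≤
        volume {x | ENNReal.ofReal s < w x} := by
  have hne {z : ℝ → ENNReal} (hz1 : ⨆ x, z x = 1) : {x | ENNReal.ofReal s < z x}.Nonempty :=
    lt_iSup_iff.mp ((ENNReal.ofReal_lt_one.mpr hs1).trans_eq hz1.symm)
  refine (ofReal_mul_volume_add_le (measurableSet_lt measurable_const hu)
    (measurableSet_lt measurable_const hv) (hne hu1) (hne hv1) ha.le hb.le).trans
    (measure_mono ?_)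
  rintro _ ⟨_, ⟨x, hx, rfl⟩, _, ⟨y, hy, rfl⟩, rfl⟩
  calc ENNReal.ofReal s = ENNReal.ofReal s ^ a * ENNReal.ofReal s ^ b := by
        rw [← ENNReal.rpow_add _ _ (by simpa using hs0) ENNReal.ofReal_ne_top, hab,
          ENNReal.rpow_one]
    _ < u x ^ a * v y ^ b :=
        ENNReal.mul_lt_mul (ENNReal.rpow_lt_rpow hx ha) (ENNReal.rpow_lt_rpow hy hb)
    _ ≤ w (a • x + b • y) := h x y

theorem weighted_lintegral_le_of_iSup_eq_one {u v w : ℝ → ENNReal} (hu : Measurable u)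
    (hv : Measurable v) (hw : Measurable w) (hu1 : ⨆ x, u x = 1) (hv1 : ⨆ x, v x = 1)
    {a b : ℝ} (ha : 0 < a) (hb : 0 < b) (hab : a + b = 1)
    (h : ∀ x y, u x ^ a * v y ^ b ≤ w (a • x + b • y)) :
    ENNReal.ofReal a * (∫⁻ x, u x) + ENNReal.ofReal b * (∫⁻ x, v x) ≤ ∫⁻ x, w x := by
  have hmeas (z : ℝ → ENNReal) : Measurable fun s : ℝ => volume {x | ENNReal.ofReal s < z x} :=
    Antitone.measurable fun s t hst =>
      measure_mono fun x hx => (ENNReal.ofReal_le_ofReal hst).trans_lt hx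
  have hcake {z : ℝ → ENNReal} (hz : Measurable z) (hz1 : ⨆ x, z x = 1) :
      ∫⁻ x, z x = ∫⁻ s in Set.Ioo (0 : ℝ) 1, volume {x | ENNReal.ofReal s < z x} := by
    simp only [← lintegral_min_one_eq volume hz, min_eq_left (hz1 ▸ le_iSup z _)]
  calc ENNReal.ofReal a * (∫⁻ x, u x) + ENNReal.ofReal b * (∫⁻ x, v x)
      = ∫⁻ s in Set.Ioo (0 : ℝ) 1, (ENNReal.ofReal a * volume {x | ENNReal.ofReal s < u x} +
          ENNReal.ofReal b * volume {x | ENNReal.ofReal s < v x}) := by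
        rw [hcake hu hu1, hcake hv hv1, lintegral_add_left ((hmeas u).const_mul _),
          lintegral_const_mul _ (hmeas u), lintegral_const_mul _ (hmeas v)]
    _ ≤ ∫⁻ s in Set.Ioo (0 : ℝ) 1, volume {x | ENNReal.ofReal s < w x} :=
        setLIntegral_mono (hmeas w) fun s hs =>
          ofReal_mul_volume_superlevel_add_le hu hv hu1 hv1 ha hb hab h hs.1 hs.2
    _ = ∫⁻ x, min (w x) 1 := (lintegral_min_one_eq volume hw).symm
    _ ≤ ∫⁻ x, w x := lintegral_mono fun x => min_le_left _ _

theorem ennreal_rpow_mul_rpow_le_add (P Q : ENNReal) {a b : ℝ} (ha : 0 < a) (hb : 0 < b)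
    (hab : a + b = 1) : P ^ a * Q ^ b ≤ ENNReal.ofReal a * P + ENNReal.ofReal b * Q := by
  rcases eq_or_ne P ⊤ with rfl | hP
  · simp [ENNReal.mul_top, ha]
  rcases eq_or_ne Q ⊤ with rfl | hQ
  · simp [ENNReal.mul_top, hb]
  lift P to NNReal using hP
  lift Q to NNReal using hQ
  have hamgm := NNReal.geom_mean_le_arith_mean2_weighted a.toNNReal b.toNNReal P Q
    (by rw [← Real.toNNReal_add ha.le hb.le, hab, Real.toNNReal_one])
  rw [Real.coe_toNNReal a ha.le, Real.coe_toNNReal b hb.le] at hamgm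
  rw [← ENNReal.coe_rpow_of_nonneg _ ha.le, ← ENNReal.coe_rpow_of_nonneg _ hb.le,
    ENNReal.ofReal, ENNReal.ofReal]
  exact_mod_cast hamgm

/-- The Prékopa–Leindler inequality for the measure `μ`. Functions take values in `[0, ∞]`, so
that the inequality can be iterated through Tonelli's theorem without integrability side
conditions. -/
def SatisfiesPrekopaLeindler {E : Type*} [AddCommMonoid E] [Module ℝ E] [MeasurableSpace E]
    (μ : Measure E) : Prop :=
  ∀ ⦃u v w : E → ENNReal⦄, Measurable u → Measurable v → Measurable w →
    ∀ ⦃a b : ℝ⦄, 0 < a → 0 < b → a + b = 1 →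
      (∀ x y, u x ^ a * v y ^ b ≤ w (a • x + b • y)) →
        (∫⁻ x, u x ∂μ) ^ a * (∫⁻ x, v x ∂μ) ^ b ≤ ∫⁻ x, w x ∂μ

theorem prekopaLeindler_real_of_bounded {u v w : ℝ → ENNReal} (hu : Measurable u)
    (hv : Measurable v) (hw : Measurable w) (hu_top : ⨆ x, u x ≠ ⊤) (hv_top : ⨆ x, v x ≠ ⊤)
    {a b : ℝ} (ha : 0 < a) (hb : 0 < b) (hab : a + b = 1)
    (h : ∀ x y, u x ^ a * v y ^ b ≤ w (a • x + b • y)) :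
    (∫⁻ x, u x) ^ a * (∫⁻ x, v x) ^ b ≤ ∫⁻ x, w x := by
  set A := ⨆ x, u x with hA
  set B := ⨆ x, v x with hB
  rcases eq_or_ne A 0 with hA0 | hA0
  · simp [ENNReal.iSup_eq_zero.mp hA0, ha]
  rcases eq_or_ne B 0 with hB0 | hB0
  · simp [ENNReal.iSup_eq_zero.mp hB0, hb]
  have hAa : A ^ a ≠ 0 ∧ A ^ a ≠ ⊤ := by simp [hA0, hu_top]
  have hBb : B ^ b ≠ 0 ∧ B ^ b ≠ ⊤ := by simp [hB0, hv_top]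
  have hscale (P Q : ENNReal) :
      (P / A) ^ a * (Q / B) ^ b = P ^ a * Q ^ b / (A ^ a * B ^ b) := by
    rw [ENNReal.div_rpow_of_nonneg _ _ ha.le, ENNReal.div_rpow_of_nonneg _ _ hb.le,
      ENNReal.mul_div_mul_comm (.inl hAa.1) (.inl hAa.2)]
  have hint {z : ℝ → ENNReal} (hz : Measurable z) (c : ENNReal) :
      ∫⁻ x, z x / c = (∫⁻ x, z x) / c := by
    simp only [div_eq_mul_inv, lintegral_mul_const _ hz]
  have hnormalized := weighted_lintegral_le_of_iSup_eq_one (hu.div_const A) (hv.div_const B)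
    (hw.div_const (A ^ a * B ^ b)) (by rw [← ENNReal.iSup_div, ← hA, ENNReal.div_self hA0 hu_top])
    (by rw [← ENNReal.iSup_div, ← hB, ENNReal.div_self hB0 hv_top]) ha hb hab fun x y => by
      rw [hscale]
      exact ENNReal.div_le_div_right (h x y) _
  have hdiv := (ennreal_rpow_mul_rpow_le_add _ _ ha hb hab).trans hnormalized
  rw [hint hu, hint hv, hint hw, hscale] at hdiv
  have hc0 := mul_ne_zero hAa.1 hBb.1
  have hc_top := ENNReal.mul_ne_top hAa.2 hBb.2
  rwa [ENNReal.div_le_iff hc0 hc_top, ENNReal.div_mul_cancel hc0 hc_top] at hdiv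

theorem tendsto_lintegral_min_natCast {α : Type*} [MeasurableSpace α] (μ : Measure α)
    {u : α → ENNReal} (hu : Measurable u) :
    Filter.Tendsto (fun n : ℕ => ∫⁻ x, min (u x) n ∂μ) Filter.atTop (nhds (∫⁻ x, u x ∂μ)) := by
  refine lintegral_tendsto_of_tendsto_of_monotone
    (fun n => (hu.min measurable_const).aemeasurable)
    (ae_of_all _ fun x m n hmn => min_le_min_left _ (by exact_mod_cast hmn))
    (ae_of_all _ fun x => ?_)
  simpa using (tendsto_const_nhds (x := u x)).min ENNReal.tendsto_nat_nhds_top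

theorem satisfiesPrekopaLeindler_volume_real :
    SatisfiesPrekopaLeindler (volume : Measure ℝ) := by
  intro u v w hu hv hw a b ha hb hab h
  rcases eq_or_ne (∫⁻ x, u x) 0 with hu0 | hu0
  · simp [hu0, ha]
  rcases eq_or_ne (∫⁻ x, v x) 0 with hv0 | hv0
  · simp [hv0, hb]
  have htrunc (z : ℝ → ENNReal) (n : ℕ) : ⨆ x, min (z x) n ≠ ⊤ :=
    ((iSup_le fun x => min_le_right _ _).trans_lt (ENNReal.natCast_lt_top n)).ne
  refine le_of_tendsto' (ENNReal.Tendsto.mul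
    ((tendsto_lintegral_min_natCast volume hu).ennrpow_const a) (.inl (by simp [hu0, ha.le]))
    ((tendsto_lintegral_min_natCast volume hv).ennrpow_const b) (.inl (by simp [hv0, hb.le])))
    fun n => ?_
  refine prekopaLeindler_real_of_bounded (hu.min measurable_const) (hv.min measurable_const) hw
    (htrunc u n) (htrunc v n) ha hb hab fun x y => le_trans ?_ (h x y)
  gcongr <;> exact min_le_left _ _

namespace SatisfiesPrekopaLeindler

variable {E F : Type*} [AddCommGroup E] [Module ℝ E] [MeasurableSpace E] [AddCommGroup F]
  [Module ℝ F] [MeasurableSpace F] {μ : Measure E} {ν : Measure F}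

theorem prod [SFinite ν] (hμ : SatisfiesPrekopaLeindler μ) (hν : SatisfiesPrekopaLeindler ν) :
    SatisfiesPrekopaLeindler (μ.prod ν) := by
  intro u v w hu hv hw a b ha hb hab h
  rw [lintegral_prod _ hu.aemeasurable, lintegral_prod _ hv.aemeasurable,
    lintegral_prod _ hw.aemeasurable]
  refine hμ hu.lintegral_prod_right' hv.lintegral_prod_right' hw.lintegral_prod_right' ha hb hab
    fun x x' => ?_
  exact hν (hu.comp measurable_prodMk_left) (hv.comp measurable_prodMk_left)
    (hw.comp measurable_prodMk_left) ha hb hab fun y y' => h (x, y) (x', y')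

theorem of_measurePreserving (hμ : SatisfiesPrekopaLeindler μ) (L : E →ₗ[ℝ] F)
    (hL : MeasurePreserving L μ ν) : SatisfiesPrekopaLeindler ν := by
  intro u v w hu hv hw a b ha hb hab h
  rw [← hL.lintegral_comp hu, ← hL.lintegral_comp hv, ← hL.lintegral_comp hw]
  refine hμ (hu.comp hL.measurable) (hv.comp hL.measurable) (hw.comp hL.measurable) ha hb hab
    fun x y => ?_
  simpa only [Function.comp_apply, map_add, map_smul] using h (L x) (L y)

end SatisfiesPrekopaLeindler

theorem satisfiesPrekopaLeindler_volume_pi :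
    ∀ k : ℕ, SatisfiesPrekopaLeindler (volume : Measure (Fin k → ℝ))
  | 0 => by
    intro u v w _ _ _ a b _ _ _ h
    simpa [Measure.volume_pi_eq_dirac (0 : Fin 0 → ℝ)] using h 0 0
  | k + 1 => by
    have hcons : ⇑(Fin.consLinearEquiv ℝ fun _ : Fin (k + 1) => ℝ).toLinearMap =
        (MeasurableEquiv.piFinSuccAbove (fun _ : Fin (k + 1) => ℝ) 0).symm := by
      ext p i
      refine Fin.cases ?_ (fun i => ?_) i <;> simp
    exact (satisfiesPrekopaLeindler_volume_real.prod
      (satisfiesPrekopaLeindler_volume_pi k)).of_measurePreserving _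
        (hcons ▸ (volume_preserving_piFinSuccAbove (fun _ : Fin (k + 1) => ℝ) 0).symm)

theorem satisfiesPrekopaLeindler_volume (E : Type*) [NormedAddCommGroup E]
    [InnerProductSpace ℝ E] [FiniteDimensional ℝ E] [MeasurableSpace E] [BorelSpace E] :
    SatisfiesPrekopaLeindler (volume : Measure E) :=
  (satisfiesPrekopaLeindler_volume_pi (Module.finrank ℝ E)).of_measurePreserving
    ((WithLp.linearEquiv 2 ℝ _).symm.trans
      (stdOrthonormalBasis ℝ E).repr.symm.toLinearEquiv).toLinearMap
    ((stdOrthonormalBasis ℝ E).measurePreserving_repr_symm.comp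
      (PiLp.volume_preserving_toLp _))

end PrekopaLeindler

section Convex

variable {E : Type*} [NormedAddCommGroup E] [NormedSpace ℝ E] {s : Set E}

theorem ball_half_subset_of_convex (hs : Convex ℝ s) {x x₀ : E} {r : ℝ} (hx : x ∈ s)
    (hball : Metric.ball x₀ r ⊆ s) : Metric.ball (midpoint ℝ x₀ x) (r / 2) ⊆ s := by
  intro z hz
  have hreflect : (2 : ℝ) • z - x ∈ Metric.ball x₀ r := by
    rw [mem_ball_iff_norm, midpoint_eq_smul_add] at hz
    rw [mem_ball_iff_norm]
    calc ‖(2 : ℝ) • z - x - x₀‖ = ‖(2 : ℝ) • (z - (⅟2 : ℝ) • (x₀ + x))‖ := by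
          rw [invOf_eq_inv]; congr 1; module
      _ = 2 * ‖z - (⅟2 : ℝ) • (x₀ + x)‖ := by rw [norm_smul, Real.norm_two]
      _ < r := by linarith
  convert hs.midpoint_mem (hball hreflect) hx using 1
  rw [midpoint_eq_smul_add, invOf_eq_inv]
  module

variable [FiniteDimensional ℝ E] [MeasurableSpace E] [BorelSpace E] (μ : Measure E)
  [μ.IsAddHaarMeasure]

theorem interior_nonempty_of_convex_of_measure_ne_zero (hs : Convex ℝ s) (hμ : μ s ≠ 0) :
    (interior s).Nonempty := by
  contrapose! hμ
  refine measure_mono_null ?_ (hs.addHaar_frontier μ)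
  rw [frontier, hμ, Set.sdiff_empty]
  exact subset_closure

theorem isBounded_of_convex_of_measure_ne_top (hs : Convex ℝ s) (hint : (interior s).Nonempty)
    (hμ : μ s ≠ ⊤) : Bornology.IsBounded s := by
  obtain ⟨x₀, hx₀⟩ := hint
  obtain ⟨r, hr, hball⟩ := Metric.isOpen_iff.mp isOpen_interior x₀ hx₀
  have htail : Filter.Tendsto (fun j : ℕ => μ (s ∩ (Metric.closedBall x₀ j)ᶜ)) Filter.atTop
      (nhds 0) := by
    have hanti : Antitone fun j : ℕ => s ∩ (Metric.closedBall x₀ (j : ℝ))ᶜ := fun i j hij =>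
      Set.inter_subset_inter_right _ (Set.compl_subset_compl.mpr
        (Metric.closedBall_subset_closedBall (by exact_mod_cast hij)))
    have hlim := tendsto_measure_iInter_atTop (μ := μ)
      (fun j : ℕ => (hs.nullMeasurableSet μ).inter
        (Metric.isClosed_closedBall (x := x₀) (ε := j)).measurableSet.compl.nullMeasurableSet)
      hanti ⟨0, (measure_mono Set.inter_subset_left).trans_lt hμ.lt_top |>.ne⟩
    rwa [← Set.inter_iInter, ← Set.compl_iUnion, Metric.iUnion_closedBall_nat, Set.compl_univ,
      Set.inter_empty, measure_empty] at hlim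
  obtain ⟨j, hj⟩ := (htail.eventually
    (gt_mem_nhds (Metric.measure_ball_pos μ (0 : E) (half_pos hr)))).exists
  refine (Metric.isBounded_iff_subset_closedBall x₀).mpr ⟨2 * j + r, fun x hx => ?_⟩
  by_contra hfar
  refine hj.not_ge ?_
  rw [← μ.addHaar_ball_center (midpoint ℝ x₀ x)]
  refine measure_mono (Set.subset_inter
    (ball_half_subset_of_convex hs hx (hball.trans interior_subset)) fun z hz hzj => hfar ?_)
  rw [Metric.mem_ball] at hz
  rw [Metric.mem_closedBall] at hzj ⊢
  have hmid : dist (midpoint ℝ x₀ x) x₀ = 2⁻¹ * dist x x₀ := by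
    rw [dist_midpoint_left, dist_comm x₀, Real.norm_two]
  linarith [dist_triangle_left (midpoint ℝ x₀ x) x₀ z]

end Convex

section Decay

variable {n : ℕ} {f : Eucl n → ℝ}

theorem IsLogConcave.convex_superlevel (hf : IsLogConcave f) {c : ℝ} (hc : 0 < c) :
    Convex ℝ {x | c ≤ f x} := by
  refine convex_iff_forall_pos.mpr fun x hx y hy a b ha hb hab => ?_
  rw [Set.mem_ofPred_eq] at hx hy
  obtain rfl : b = 1 - a := by linarith
  calc c = c ^ a * c ^ (1 - a) := by rw [← Real.rpow_add hc, hab, Real.rpow_one]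
    _ ≤ f x ^ a * f y ^ (1 - a) := by
        have := Real.rpow_nonneg (hc.le.trans hx) a
        gcongr
    _ ≤ f (a • x + (1 - a) • y) := hf x y a ha (by linarith)

theorem IsLogConcave.le_mul_exp_neg_norm (hf : IsLogConcave f) (hnonneg : ∀ x, 0 ≤ f x)
    {x₀ : Eucl n} {R : ℝ} (hx₀ : 0 < f x₀) (hR : 0 < R)
    (hsphere : ∀ y, ‖y - x₀‖ = R → f y ≤ f x₀ * Real.exp (-1)) {x : Eucl n}
    (hx : R < ‖x - x₀‖) : f x ≤ f x₀ * Real.exp (-(‖x - x₀‖ / R)) := by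
  have hρ : 0 < ‖x - x₀‖ := hR.trans hx
  set τ := R / ‖x - x₀‖ with hτ
  have hτ0 : 0 < τ := div_pos hR hρ
  have hτ1 : τ < 1 := (div_lt_one hρ).mpr hx
  have hnorm : ‖τ • x + (1 - τ) • x₀ - x₀‖ = R := by
    rw [show τ • x + (1 - τ) • x₀ - x₀ = τ • (x - x₀) by module, norm_smul,
      Real.norm_of_nonneg hτ0.le, div_mul_cancel₀ _ hρ.ne']
  have hchord : f x ^ τ * f x₀ ^ (1 - τ) ≤ f x₀ ^ τ * Real.exp (-1) * f x₀ ^ (1 - τ) := by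
    calc f x ^ τ * f x₀ ^ (1 - τ) ≤ f (τ • x + (1 - τ) • x₀) := hf x x₀ τ hτ0 hτ1
      _ ≤ f x₀ * Real.exp (-1) := hsphere _ hnorm
      _ = f x₀ ^ τ * Real.exp (-1) * f x₀ ^ (1 - τ) := by
          rw [mul_right_comm, ← Real.rpow_add hx₀, add_sub_cancel, Real.rpow_one]
  rw [← Real.rpow_le_rpow_iff (hnonneg x) (by positivity) hτ0]
  calc f x ^ τ ≤ f x₀ ^ τ * Real.exp (-1) :=
        le_of_mul_le_mul_right hchord (Real.rpow_pos_of_pos hx₀ _)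
    _ = (f x₀ * Real.exp (-(‖x - x₀‖ / R))) ^ τ := by
        rw [Real.mul_rpow hx₀.le (Real.exp_pos _).le, ← Real.exp_mul, hτ, neg_mul,
          div_mul_div_cancel₀ hR.ne', div_self hρ.ne']

theorem MemQ0.measurable (hf : MemQ0 f) : Measurable f := hf.2.2.1.measurable

theorem MemQ0.exists_interior_superlevel_nonempty (hf : MemQ0 f) :
    ∃ c : ℝ, 0 < c ∧ (interior {x | c ≤ f x}).Nonempty := by
  obtain ⟨hnonneg, hlc, -, hint, hpos⟩ := hf
  have hsupport : Function.support f ⊆ ⋃ j : ℕ, {x | 1 / ((j : ℝ) + 1) ≤ f x} := fun x hx =>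
    let ⟨j, hj⟩ := exists_nat_one_div_lt ((hnonneg x).lt_of_ne' hx)
    Set.mem_iUnion.mpr ⟨j, hj.le⟩
  have hμ : volume (⋃ j : ℕ, {x | 1 / ((j : ℝ) + 1) ≤ f x}) ≠ 0 :=
    (((integral_pos_iff_support_of_nonneg hnonneg hint).mp hpos).trans_le
      (measure_mono hsupport)).ne'
  obtain ⟨j, hj⟩ := exists_measure_pos_of_not_measure_iUnion_null hμ
  exact ⟨_, Nat.one_div_pos_of_nat, interior_nonempty_of_convex_of_measure_ne_zero volume
    (hlc.convex_superlevel Nat.one_div_pos_of_nat) hj.ne'⟩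

theorem MemQ0.isBounded_superlevel (hf : MemQ0 f) {c : ℝ} (hc : 0 < c) :
    Bornology.IsBounded {x | c ≤ f x} := by
  obtain ⟨c₀, hc₀, hint⟩ := hf.exists_interior_superlevel_nonempty
  have hmin : 0 < min c c₀ := lt_min hc hc₀
  have hsub {t : ℝ} (ht : min c c₀ ≤ t) : {x | t ≤ f x} ⊆ {x | min c c₀ ≤ f x} :=
    Set.ofPred_subset_ofPred.mpr fun _ => ht.trans
  exact (isBounded_of_convex_of_measure_ne_top volume (hf.2.1.convex_superlevel hmin)
    (hint.mono (interior_mono (hsub (min_le_right _ _))))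
    (hf.2.2.2.1.measure_ge_lt_top hmin).ne).subset (hsub (min_le_left _ _))

theorem MemQ0.exists_forall_le (hf : MemQ0 f) : ∃ x₀, 0 < f x₀ ∧ ∀ x, f x ≤ f x₀ := by
  obtain ⟨c, hc, hne⟩ := hf.exists_interior_superlevel_nonempty
  have hcompact : IsCompact {x | c ≤ f x} := Metric.isCompact_of_isClosed_isBounded
    (upperSemicontinuous_iff_isClosed_preimage.mp hf.2.2.1 c) (hf.isBounded_superlevel hc)
  obtain ⟨x₀, hx₀, hmax⟩ := (hf.2.2.1.upperSemicontinuousOn _).exists_isMaxOn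
    (hne.mono interior_subset) hcompact
  refine ⟨x₀, hc.trans_le hx₀, fun x => ?_⟩
  rcases le_or_gt c (f x) with hx | hx
  · exact hmax hx
  · exact hx.le.trans hx₀

theorem MemQ0.bddAbove (hf : MemQ0 f) : BddAbove (Set.range f) :=
  let ⟨x₀, _, hmax⟩ := hf.exists_forall_le
  ⟨f x₀, Set.forall_mem_range.mpr hmax⟩

theorem MemQ0.exists_le_mul_exp_neg_norm (hf : MemQ0 f) :
    ∃ K a : ℝ, 0 < K ∧ 0 < a ∧ ∀ x, f x ≤ K * Real.exp (-(a * ‖x‖)) := by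
  obtain ⟨x₀, hpos, hmax⟩ := hf.exists_forall_le
  obtain ⟨R, hR, hsub⟩ := (hf.isBounded_superlevel
    (mul_pos hpos (Real.exp_pos (-1)))).subset_closedBall_lt 0 x₀
  have hsphere (y : Eucl n) (hy : ‖y - x₀‖ = 2 * R) : f y ≤ f x₀ * Real.exp (-1) := by
    by_contra! hlt
    have := mem_closedBall_iff_norm.mp (hsub hlt.le)
    linarith
  have hdecay (x : Eucl n) : f x ≤ f x₀ * Real.exp (1 - ‖x - x₀‖ / (2 * R)) := by
    rcases le_or_gt ‖x - x₀‖ (2 * R) with hx | hx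
    · refine (hmax x).trans (le_mul_of_one_le_right hpos.le (Real.one_le_exp ?_))
      exact sub_nonneg.mpr ((div_le_one (by positivity)).mpr hx)
    · refine (hf.2.1.le_mul_exp_neg_norm hf.1 hpos (by positivity) hsphere hx).trans ?_
      gcongr
      linarith
  refine ⟨f x₀ * Real.exp (1 + ‖x₀‖ / (2 * R)), 1 / (2 * R), by positivity, by positivity,
    fun x => (hdecay x).trans ?_⟩
  rw [mul_assoc, ← Real.exp_add]
  gcongr
  calc 1 - ‖x - x₀‖ / (2 * R) ≤ 1 - (‖x‖ - ‖x₀‖) / (2 * R) := by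
        gcongr; exact norm_sub_norm_le x x₀
    _ = 1 + ‖x₀‖ / (2 * R) + -(1 / (2 * R) * ‖x‖) := by ring

theorem exists_exp_neg_mul_le_one_add_rpow {a : ℝ} (ha : 0 < a) (N : ℕ) :
    ∃ C : ℝ, 0 < C ∧ ∀ t : ℝ, 0 ≤ t → Real.exp (-(a * t)) ≤ C * (1 + t) ^ (-(N : ℝ)) := by
  refine ⟨Real.exp a * N.factorial / a ^ N, by positivity, fun t ht => ?_⟩
  have hpow := Real.pow_div_factorial_le_exp (a * (1 + t)) (by positivity) N
  calc Real.exp (-(a * t)) = Real.exp a / Real.exp (a * (1 + t)) := by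
        rw [← Real.exp_sub]; ring_nf
    _ ≤ Real.exp a / ((a * (1 + t)) ^ N / N.factorial) := by gcongr
    _ = Real.exp a * N.factorial / a ^ N * (1 + t) ^ (-(N : ℝ)) := by
        rw [Real.rpow_neg (by positivity), Real.rpow_natCast, mul_pow]
        field_simp

theorem MemQ0.exists_le_mul_one_add_norm_rpow (hf : MemQ0 f) (N : ℕ) :
    ∃ C : ℝ, 0 < C ∧ ∀ x, f x ≤ C * (1 + ‖x‖) ^ (-(N : ℝ)) := by
  obtain ⟨K, a, hK, ha, hexp⟩ := hf.exists_le_mul_exp_neg_norm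
  obtain ⟨C, hC, hpoly⟩ := exists_exp_neg_mul_le_one_add_rpow ha N
  refine ⟨K * C, by positivity, fun x => (hexp x).trans ?_⟩
  rw [mul_assoc]
  gcongr
  exact hpoly _ (norm_nonneg x)

theorem MemQ0.integrable_mul (hf : MemQ0 f) {u : Eucl n → ℝ} (hu : Measurable u) {N : ℕ}
    (hbound : ∀ x, |u x| ≤ (1 + ‖x‖) ^ N) : Integrable fun x => f x * u x := by
  obtain ⟨C, hC, hdecay⟩ := hf.exists_le_mul_one_add_norm_rpow (n + 1 + N)
  refine ((integrable_one_add_norm (r := (n + 1 : ℕ)) (by simp)).const_mul C).mono'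
    (hf.measurable.mul hu).aestronglyMeasurable (ae_of_all _ fun x => ?_)
  have hx : 0 < 1 + ‖x‖ := by positivity
  calc ‖f x * u x‖ = f x * |u x| := by
        rw [norm_mul, Real.norm_of_nonneg (hf.1 x), Real.norm_eq_abs]
    _ ≤ C * (1 + ‖x‖) ^ (-((n + 1 + N : ℕ) : ℝ)) * (1 + ‖x‖) ^ N := by
        have := hf.1 x
        gcongr
        exacts [hdecay x, hbound x]
    _ = C * (1 + ‖x‖) ^ (-((n + 1 : ℕ) : ℝ)) := by
        rw [mul_assoc, ← Real.rpow_natCast (1 + ‖x‖) N, ← Real.rpow_add hx]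
        push_cast
        ring_nf

end Decay

section Semicontinuity

variable {X Y : Type*} [TopologicalSpace X] [TopologicalSpace Y]

theorem measurableSet_image_of_isClosed [SigmaCompactSpace X] [T2Space Y] [MeasurableSpace Y]
    [OpensMeasurableSpace Y] {g : X → Y} (hg : Continuous g) {s : Set X} (hs : IsClosed s) :
    MeasurableSet (g '' s) := by
  obtain ⟨K, hK, hKs⟩ := (isSigmaCompact_univ.of_isClosed_subset hs s.subset_univ).image hg
  rw [← hKs]
  exact .iUnion fun j => (hK j).measurableSet

theorem measurable_ciSup_of_upperSemicontinuous {Z : Type*} [TopologicalSpace Z] [Nonempty Z]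
    [SigmaCompactSpace Y] [SigmaCompactSpace Z] [T2Space Y] [MeasurableSpace Y]
    [OpensMeasurableSpace Y] {φ : Y × Z → ℝ} (hφ : UpperSemicontinuous φ)
    (hbdd : BddAbove (Set.range φ)) : Measurable fun y => ⨆ z, φ (y, z) := by
  refine measurable_of_Ioi fun a => ?_
  obtain ⟨t, -, hat, ht⟩ := exists_seq_strictAnti_tendsto a
  have hpreimage : (fun y => ⨆ z, φ (y, z)) ⁻¹' Set.Ioi a =
      ⋃ j, Prod.fst '' (φ ⁻¹' Set.Ici (t j)) := by
    rw [← Set.image_iUnion, ← Set.preimage_iUnion, iUnion_Ici_eq_Ioi_of_lt_of_tendsto hat ht]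
    ext y
    have hy : BddAbove (Set.range fun z => φ (y, z)) :=
      hbdd.mono (Set.range_comp_subset_range (Prod.mk y) φ)
    simp [lt_ciSup_iff hy]
  rw [hpreimage]
  exact .iUnion fun j => measurableSet_image_of_isClosed continuous_fst
    (upperSemicontinuous_iff_isClosed_preimage.mp hφ (t j))

theorem upperSemicontinuous_lintegral_of_dominated [FirstCountableTopology X] {α : Type*}
    [MeasurableSpace α] {μ : Measure α} {F : X → α → ENNReal} {g : α → ENNReal}
    (hF : ∀ x, Measurable (F x)) (hFg : ∀ x a, F x a ≤ g a) (hg : ∫⁻ a, g a ∂μ ≠ ⊤)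
    (husc : ∀ a, UpperSemicontinuous fun x => F x a) :
    UpperSemicontinuous fun x => ∫⁻ a, F x a ∂μ := by
  intro x c hc
  by_contra hfreq
  obtain ⟨s, hs, hsc⟩ := Filter.exists_seq_forall_of_frequently (Filter.not_eventually.mp hfreq)
  refine hc.not_ge ?_
  calc c ≤ Filter.limsup (fun j => ∫⁻ a, F (s j) a ∂μ) Filter.atTop :=
        Filter.le_limsup_of_frequently_le' (.of_forall fun j => not_lt.mp (hsc j))
    _ ≤ ∫⁻ a, Filter.limsup (fun j => F (s j) a) Filter.atTop ∂μ :=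
        limsup_lintegral_le g (fun j => hF (s j)) (fun j => ae_of_all _ (hFg (s j))) hg
    _ ≤ ∫⁻ a, F x a ∂μ := lintegral_mono fun a =>
        (Filter.limsup_le_limsup_of_le (u := fun x => F x a) hs).trans
          (upperSemicontinuousAt_iff_limsup_le.mp (husc a x))

end Semicontinuity

section Splitting

variable {F G E : Type*}
  [NormedAddCommGroup F] [InnerProductSpace ℝ F]
  [NormedAddCommGroup G] [InnerProductSpace ℝ G]
  [NormedAddCommGroup E] [InnerProductSpace ℝ E]

variable (F G E) in
/-- An isometric identification of `E` with the orthogonal direct sum of `F` and `G`. A subspace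
`H ⊆ E` is handled through a splitting with `H` the image of `F` and `Hᗮ` the image of `G`, so that
projections, sections and marginals become operations on `F × G`. -/
abbrev OrthogonalSplitting := WithLp 2 (F × G) ≃ₗᵢ[ℝ] E

namespace OrthogonalSplitting

variable (T : OrthogonalSplitting F G E)

/-- The splitting as a linear homeomorphism defined on the ordinary product `F × G`. -/
def join : (F × G) ≃L[ℝ] E :=
  (WithLp.prodContinuousLinearEquiv 2 ℝ F G).symm.trans T.toContinuousLinearEquiv

theorem inner_join (p q : F × G) :
    inner ℝ (T.join p) (T.join q) = inner ℝ p.1 q.1 + inner ℝ p.2 q.2 := by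
  simp [join, LinearIsometryEquiv.inner_map_map, WithLp.prod_inner_apply]

theorem norm_fst_le_norm_join (p : F × G) : ‖p.1‖ ≤ ‖T.join p‖ := by
  simpa [join] using WithLp.norm_fst_le (α := F) (β := G) (WithLp.toLp 2 p)

theorem inner_join_fst (y : F) (x : E) :
    inner ℝ (T.join (y, 0)) x = inner ℝ y (T.join.symm x).1 := by
  simpa using T.inner_join (y, 0) (T.join.symm x)

theorem inner_join_snd (z : G) (x : E) :
    inner ℝ (T.join (0, z)) x = inner ℝ z (T.join.symm x).2 := by
  simpa using T.inner_join (0, z) (T.join.symm x)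

/-- The inclusion of the first summand. -/
def inl : F →ₗᵢ[ℝ] E where
  toLinearMap := T.join.toLinearMap ∘ₗ LinearMap.inl ℝ F G
  norm_map' y := by simp [join]

/-- The subspace of `E` identified with the first summand. -/
def base : Submodule ℝ E := LinearMap.range T.inl.toLinearMap

theorem finrank_base : Module.finrank ℝ T.base = Module.finrank ℝ F :=
  LinearMap.finrank_range_of_inj T.inl.injective

theorem mem_base_orthogonal_iff {x : E} : x ∈ T.baseᗮ ↔ (T.join.symm x).1 = 0 := by
  have hinner (y : F) : inner ℝ (T.inl y) x = inner ℝ y (T.join.symm x).1 :=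
    T.inner_join_fst y x
  calc x ∈ T.baseᗮ ↔ ∀ y, inner ℝ (T.inl y) x = 0 := by
        simp [Submodule.mem_orthogonal, base]
    _ ↔ (T.join.symm x).1 = 0 := by
        simp only [hinner]
        exact ⟨fun h => inner_self_eq_zero.mp (h _), fun h y => by rw [h, inner_zero_right]⟩

/-- The projection `P_H f` onto the first summand. -/
def projection (f : E → ℝ) (y : F) : ℝ := ⨆ z, f (T.join (y, z))

theorem projection_nonneg {f : E → ℝ} (hf : ∀ x, 0 ≤ f x) (y : F) : 0 ≤ T.projection f y :=
  Real.iSup_nonneg fun _ => hf _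

theorem le_projection {f : E → ℝ} (hbdd : BddAbove (Set.range f)) (x : E) :
    f x ≤ T.projection f (T.join.symm x).1 := by
  simpa [projection, Function.comp_def] using le_ciSup (hbdd.mono (Set.range_comp_subset_range
    (fun z => T.join ((T.join.symm x).1, z)) f)) (T.join.symm x).2

theorem projection_eq_iSup_orthogonal (f : E → ℝ) (y : F) :
    T.projection f y = ⨆ z : T.baseᗮ, f (T.join (y, 0) + z) := by
  refine Function.Surjective.iSup_congr
    (fun z => ⟨T.join (0, z), T.mem_base_orthogonal_iff.mpr (by simp)⟩) ?_ fun z => ?_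
  · rintro ⟨x, hx⟩
    refine ⟨(T.join.symm x).2, Subtype.ext ?_⟩
    have hsymm : T.join.symm x = (0, (T.join.symm x).2) :=
      Prod.ext (T.mem_base_orthogonal_iff.mp hx) rfl
    exact (T.join.symm_apply_eq.mp hsymm).symm
  · rw [← map_add, Prod.mk_add_mk, add_zero, zero_add]

variable [FiniteDimensional ℝ F] [MeasurableSpace F] [BorelSpace F]

theorem measurable_projection [FiniteDimensional ℝ G] {f : E → ℝ}
    (husc : UpperSemicontinuous f) (hbdd : BddAbove (Set.range f)) : Measurable (T.projection f) :=
  measurable_ciSup_of_upperSemicontinuous (φ := f ∘ T.join) (husc.comp T.join.continuous)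
    (hbdd.mono (Set.range_comp_subset_range _ _))

variable [FiniteDimensional ℝ E] [MeasurableSpace E] [BorelSpace E]

theorem integral_base (φ : E → ℝ) : ∫ y : T.base, φ y = ∫ y : F, φ (T.join (y, 0)) :=
  (T.inl.equivRange.measurePreserving.integral_comp
    T.inl.equivRange.toHomeomorph.measurableEmbedding fun y : T.base => φ y).symm

variable [FiniteDimensional ℝ G] [MeasurableSpace G] [BorelSpace G]

theorem measurePreserving_join : MeasurePreserving T.join :=
  T.measurePreserving.comp (WithLp.volume_preserving_toLp F G)

/-- The marginal of `f` on the second summand. -/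
def marginal (f : E → ℝ) (z : G) : ℝ := ∫ y, f (T.join (y, z))

theorem integral_marginal_mul {f : E → ℝ} {ψ : E → ℝ} {φ : G → ℝ}
    (hφ : ∀ p, ψ (T.join p) = φ p.2) (hint : Integrable fun x => f x * ψ x) :
    ∫ z, T.marginal f z * φ z = ∫ x, f x * ψ x := by
  have hemb := T.join.toHomeomorph.measurableEmbedding
  rw [← T.measurePreserving_join.integral_comp hemb, Measure.volume_eq_prod, integral_prod_symm]
  · simp only [hφ, integral_mul_const, marginal]
  · exact (T.measurePreserving_join.integrable_comp_emb hemb).mpr hint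

theorem integral_marginal {f : E → ℝ} (hf : Integrable f) :
    ∫ z, T.marginal f z = ∫ x, f x := by
  simpa using T.integral_marginal_mul (ψ := 1) (φ := 1) (fun _ => rfl) (by simpa using hf)

theorem integrable_marginal {f : E → ℝ} (hf : Integrable f) : Integrable (T.marginal f) :=
  Integrable.integral_prod_right (f := fun p => f (T.join p))
    ((T.measurePreserving_join.integrable_comp_emb
      T.join.toHomeomorph.measurableEmbedding).mpr hf)

end OrthogonalSplitting

end Splitting

section OfBasis

variable {ι κ σ E : Type*} [Fintype ι] [Fintype κ] [Fintype σ]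
  [NormedAddCommGroup E] [InnerProductSpace ℝ E]

namespace OrthogonalSplitting

/-- The splitting of `E` along an orthonormal basis: `e` distributes the basis vectors over the
coordinates of the two summands. -/
def ofBasis (b : OrthonormalBasis ι ℝ E) (e : κ ⊕ σ ≃ ι) :
    OrthogonalSplitting (EuclideanSpace ℝ κ) (EuclideanSpace ℝ σ) E :=
  ((EuclideanSpace.basisFun κ ℝ).prod (EuclideanSpace.basisFun σ ℝ)).equiv b e

variable (b : OrthonormalBasis ι ℝ E) (e : κ ⊕ σ ≃ ι)

theorem ofBasis_join_single_left [DecidableEq κ] (a : κ) :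
    (ofBasis b e).join (EuclideanSpace.single a 1, 0) = b (e (Sum.inl a)) := by
  rw [← ((EuclideanSpace.basisFun κ ℝ).prod (EuclideanSpace.basisFun σ ℝ)).equiv_apply_basis b e]
  simp [ofBasis, join, OrthonormalBasis.prod_apply]

theorem ofBasis_join_single_right [DecidableEq σ] (a : σ) :
    (ofBasis b e).join (0, EuclideanSpace.single a 1) = b (e (Sum.inr a)) := by
  rw [← ((EuclideanSpace.basisFun κ ℝ).prod (EuclideanSpace.basisFun σ ℝ)).equiv_apply_basis b e]
  simp [ofBasis, join, OrthonormalBasis.prod_apply]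

theorem ofBasis_join_symm_fst_apply (x : E) (a : κ) :
    ((ofBasis b e).join.symm x).1 a = b.repr x (e (Sum.inl a)) := by
  classical
  have hinner := (ofBasis b e).inner_join_fst (EuclideanSpace.single a 1) x
  rw [ofBasis_join_single_left] at hinner
  simpa [b.repr_apply_apply, EuclideanSpace.inner_single_left] using hinner.symm

end OrthogonalSplitting

end OfBasis

section Marginal

variable {m n : ℕ} {F : Type*} [NormedAddCommGroup F] [InnerProductSpace ℝ F]
  [MeasurableSpace F] [BorelSpace F] {f : Eucl n → ℝ}

section

variable {G : Type*} [NormedAddCommGroup G] [InnerProductSpace ℝ G]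
  (T : OrthogonalSplitting F G (Eucl n))

theorem MemQ0.measurable_ofReal_join_left (hf : MemQ0 f) (z : G) :
    Measurable fun y => ENNReal.ofReal (f (T.join (y, z))) :=
  (hf.measurable.comp
    (T.join.continuous.comp (Continuous.prodMk_left z)).measurable).ennreal_ofReal

variable [FiniteDimensional ℝ F]

theorem MemQ0.exists_integrable_forall_join_le (hf : MemQ0 f) :
    ∃ h : F → ℝ, Integrable h ∧ ∀ p, f (T.join p) ≤ h p.1 := by
  obtain ⟨C, hC, hdecay⟩ := hf.exists_le_mul_one_add_norm_rpow (Module.finrank ℝ F + 1)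
  refine ⟨fun y => C * (1 + ‖y‖) ^ (-((Module.finrank ℝ F + 1 : ℕ) : ℝ)),
    (integrable_one_add_norm (by simp)).const_mul C, fun p => (hdecay _).trans ?_⟩
  refine mul_le_mul_of_nonneg_left ?_ hC.le
  exact Real.rpow_le_rpow_of_nonpos (by positivity) (by gcongr; exact T.norm_fst_le_norm_join p)
    (neg_nonpos.mpr (Nat.cast_nonneg _))

theorem MemQ0.integrable_projection [FiniteDimensional ℝ G] (hf : MemQ0 f) :
    Integrable (T.projection f) := by
  obtain ⟨h, hh, hle⟩ := hf.exists_integrable_forall_join_le T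
  refine hh.mono' (T.measurable_projection hf.2.2.1 hf.bddAbove).aestronglyMeasurable
    (ae_of_all _ fun y => ?_)
  rw [Real.norm_of_nonneg (T.projection_nonneg hf.1 y)]
  exact ciSup_le fun z => hle (y, z)

theorem MemQ0.integrable_join_left (hf : MemQ0 f) (z : G) :
    Integrable fun y => f (T.join (y, z)) := by
  obtain ⟨h, hh, hle⟩ := hf.exists_integrable_forall_join_le T
  refine hh.mono' (hf.measurable.comp
    (T.join.continuous.comp (Continuous.prodMk_left z)).measurable).aestronglyMeasurable
    (ae_of_all _ fun y => ?_)
  rw [Real.norm_of_nonneg (hf.1 _)]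
  exact hle (y, z)

theorem MemQ0.ofReal_marginal (hf : MemQ0 f) (z : G) :
    ENNReal.ofReal (T.marginal f z) = ∫⁻ y, ENNReal.ofReal (f (T.join (y, z))) :=
  ofReal_integral_eq_lintegral_ofReal (hf.integrable_join_left T z) (ae_of_all _ fun _ => hf.1 _)

theorem MemQ0.upperSemicontinuous_marginal (hf : MemQ0 f) :
    UpperSemicontinuous (T.marginal f) := by
  obtain ⟨h, hh, hle⟩ := hf.exists_integrable_forall_join_le T
  have hlintegral : UpperSemicontinuous fun z => ENNReal.ofReal (T.marginal f z) := by
    simp only [hf.ofReal_marginal T]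
    refine upperSemicontinuous_lintegral_of_dominated (hf.measurable_ofReal_join_left T)
      (fun z y => ENNReal.ofReal_le_ofReal (hle (y, z))) ?_ fun y => ?_
    · exact hh.lintegral_lt_top.ne
    · exact ENNReal.continuous_ofReal.comp_upperSemicontinuous
        (hf.2.2.1.comp (T.join.continuous.comp (Continuous.prodMk_right y)))
        fun _ _ => ENNReal.ofReal_le_ofReal
  intro z c hc
  have hc' : 0 < c := (integral_nonneg fun _ => hf.1 _).trans_lt hc
  filter_upwards [hlintegral z (ENNReal.ofReal c) ((ENNReal.ofReal_lt_ofReal_iff hc').mpr hc)]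
    with z' hz' using (ENNReal.ofReal_lt_ofReal_iff hc').mp hz'

end

variable [FiniteDimensional ℝ F] (T : OrthogonalSplitting F (Eucl m) (Eucl n))

theorem MemQ0.isLogConcave_marginal (hf : MemQ0 f) : IsLogConcave (T.marginal f) := by
  intro z z' t ht0 ht1
  have ht1' : 0 < 1 - t := sub_pos.mpr ht1
  have hnonneg (z : Eucl m) : 0 ≤ T.marginal f z := integral_nonneg fun _ => hf.1 _
  rw [← ENNReal.ofReal_le_ofReal_iff (hnonneg _),
    ENNReal.ofReal_mul (Real.rpow_nonneg (hnonneg z) t),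
    ← ENNReal.ofReal_rpow_of_nonneg (hnonneg z) ht0.le,
    ← ENNReal.ofReal_rpow_of_nonneg (hnonneg z') ht1'.le,
    hf.ofReal_marginal, hf.ofReal_marginal, hf.ofReal_marginal]
  refine satisfiesPrekopaLeindler_volume F (hf.measurable_ofReal_join_left T z)
    (hf.measurable_ofReal_join_left T z') (hf.measurable_ofReal_join_left T _) ht0 ht1'
    (add_sub_cancel t 1) fun y y' => ?_
  rw [ENNReal.ofReal_rpow_of_nonneg (hf.1 _) ht0.le,
    ENNReal.ofReal_rpow_of_nonneg (hf.1 _) ht1'.le,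
    ← ENNReal.ofReal_mul (Real.rpow_nonneg (hf.1 _) t)]
  refine ENNReal.ofReal_le_ofReal ((hf.2.1 (T.join (y, z)) (T.join (y', z')) t ht0 ht1).trans_eq ?_)
  rw [← map_smul, ← map_smul, ← map_add]
  rfl

theorem MemQ0.marginal (hf : MemQ0 f) : MemQ0 (T.marginal f) := by
  have hint := hf.2.2.2.1
  exact ⟨fun _ => integral_nonneg fun _ => hf.1 _, hf.isLogConcave_marginal T,
    hf.upperSemicontinuous_marginal T, T.integrable_marginal hint,
    (T.integral_marginal hint).symm ▸ hf.2.2.2.2⟩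

theorem sectL1_base {G : Type*} [NormedAddCommGroup G] [InnerProductSpace ℝ G]
    (T : OrthogonalSplitting F G (Eucl n)) : sectL1 f T.base = T.marginal f 0 :=
  T.integral_base f

theorem projL1_base {G : Type*} [NormedAddCommGroup G] [InnerProductSpace ℝ G]
    (T : OrthogonalSplitting F G (Eucl n)) : projL1 f T.base = ∫ y, T.projection f y := by
  simp only [T.projection_eq_iSup_orthogonal]
  exact T.integral_base fun x => ⨆ z : T.baseᗮ, f (x + z)

end Marginal

section Covariance

open ProbabilityTheory

variable {n : ℕ} {f : Eucl n → ℝ}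

/-- The probability measure `‖f‖₁⁻¹ f(x) dx`. -/
def probMeasure (f : Eucl n → ℝ) : Measure (Eucl n) :=
  volume.withDensity fun x => ENNReal.ofReal (f x / ∫ x, f x)

theorem MemQ0.isProbabilityMeasure (hf : MemQ0 f) : IsProbabilityMeasure (probMeasure f) := by
  refine ⟨?_⟩
  rw [probMeasure, withDensity_apply _ .univ, setLIntegral_univ,
    ← ofReal_integral_eq_lintegral_ofReal (hf.2.2.2.1.div_const _)
    (ae_of_all _ fun x => div_nonneg (hf.1 x) hf.2.2.2.2.le), integral_div,
    div_self hf.2.2.2.2.ne', ENNReal.ofReal_one]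

theorem MemQ0.integral_probMeasure (hf : MemQ0 f) (φ : Eucl n → ℝ) :
    ∫ x, φ x ∂probMeasure f = (∫ x, f x * φ x) / ∫ x, f x := by
  rw [probMeasure, integral_withDensity_eq_integral_toReal_smul
    (hf.measurable.div_const _).ennreal_ofReal (ae_of_all _ fun _ => ENNReal.ofReal_lt_top),
    ← integral_div]
  refine integral_congr_ae (ae_of_all _ fun x => ?_)
  simp only [ENNReal.toReal_ofReal (div_nonneg (hf.1 x) hf.2.2.2.2.le), smul_eq_mul,
    div_mul_eq_mul_div]

theorem MemQ0.memLp_id_probMeasure (hf : MemQ0 f) : MemLp id 2 (probMeasure f) := by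
  rw [memLp_two_iff_integrable_sq_norm measurable_id.aestronglyMeasurable, probMeasure,
    integrable_withDensity_iff (hf.measurable.div_const _).ennreal_ofReal
      (ae_of_all _ fun _ => ENNReal.ofReal_lt_top)]
  have hint : Integrable fun x => f x * ‖x‖ ^ 2 := hf.integrable_mul (N := 2) (by fun_prop)
    fun x => by rw [abs_of_nonneg (by positivity)]; gcongr; linarith
  refine (hint.div_const (∫ x, f x)).congr (ae_of_all _ fun x => ?_)
  simp only [ENNReal.toReal_ofReal (div_nonneg (hf.1 x) hf.2.2.2.2.le), id]
  ring

theorem MemQ0.covarianceBilin_probMeasure (hf : MemQ0 f) (u v : Eucl n) :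
    covarianceBilin (probMeasure f) u v = u.ofLp ⬝ᵥ (covMatrix f).mulVec v.ofLp := by
  have := hf.isProbabilityMeasure
  have hmemLp (i : Fin n) : MemLp (fun x : Eucl n => x i) 2 (probMeasure f) :=
    (EuclideanSpace.proj (𝕜 := ℝ) i).comp_memLp' hf.memLp_id_probMeasure
  have hcov (i j : Fin n) :
      cov[fun x => x i, fun x => x j; probMeasure f] = covMatrix f i j := by
    rw [covariance_eq_sub (hmemLp i) (hmemLp j)]
    simp only [Pi.mul_apply, hf.integral_probMeasure, covMatrix, Matrix.of_apply, mul_assoc]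
  have hexpand := covarianceBilin_apply_pi hmemLp u v
  simp only [hcov] at hexpand
  rw [show (fun x : Eucl n => WithLp.toLp 2 fun i => x i) = id from rfl, Measure.map_id] at hexpand
  simp only [hexpand, dotProduct, Matrix.mulVec, Finset.mul_sum]
  exact Finset.sum_congr rfl fun i _ => Finset.sum_congr rfl fun j _ => by ring

theorem isHermitian_covMatrix (f : Eucl n → ℝ) : (covMatrix f).IsHermitian := by
  ext i j
  simp only [covMatrix, Matrix.conjTranspose_apply, Matrix.of_apply, star_trivial,
    mul_right_comm (f _)]
  ring

theorem volume_setOf_inner_eq {E : Type*} [NormedAddCommGroup E] [InnerProductSpace ℝ E]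
    [FiniteDimensional ℝ E] [MeasurableSpace E] [BorelSpace E] {u : E} (hu : u ≠ 0) (c : ℝ) :
    volume {x | inner ℝ u x = c} = 0 := by
  let S : AffineSubspace ℝ E :=
    (AffineSubspace.mk' c ⊥).comap (innerSL ℝ u).toLinearMap.toAffineMap
  have hS : (S : Set E) = {x | inner ℝ u x = c} := by
    ext x
    simp [S, AffineSubspace.mem_mk', sub_eq_zero]
  rw [← hS]
  refine Measure.addHaar_affineSubspace volume S fun htop => ?_
  have hmem (x : E) : inner ℝ u x = c := by
    have hx : x ∈ (S : Set E) := htop ▸ AffineSubspace.mem_top ℝ E x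
    rwa [hS] at hx
  exact hu (inner_self_eq_zero.mp ((hmem u).trans ((hmem 0).symm.trans (inner_zero_right u))))

theorem MemQ0.posDef_covMatrix (hf : MemQ0 f) : (covMatrix f).PosDef := by
  have := hf.isProbabilityMeasure
  refine .of_dotProduct_mulVec_pos (isHermitian_covMatrix f) fun u hu => ?_
  rw [star_trivial, ← hf.covarianceBilin_probMeasure (WithLp.toLp 2 u) (WithLp.toLp 2 u)]
  refine (covarianceBilin_self_nonneg _).lt_of_ne' fun hzero => ?_
  rw [covarianceBilin_self hf.memLp_id_probMeasure] at hzero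
  have hconst := ae_eq_integral_of_variance_eq_zero
    (hf.memLp_id_probMeasure.const_inner (WithLp.toLp 2 u)) hzero
  have hnull := withDensity_absolutelyContinuous volume (fun x => ENNReal.ofReal (f x / ∫ x, f x))
    (volume_setOf_inner_eq ((WithLp.toLp_eq_zero 2).not.mpr hu)
      (∫ x, inner ℝ (WithLp.toLp 2 u) x ∂probMeasure f))
  refine IsProbabilityMeasure.ne_zero (probMeasure f) (Measure.measure_univ_eq_zero.mp ?_)
  exact measure_mono_null (fun x _ => em _) (measure_union_null hnull hconst)

theorem MemQ0.probMeasure_marginal {m : ℕ} {F : Type*} [NormedAddCommGroup F]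
    [InnerProductSpace ℝ F] [FiniteDimensional ℝ F] [MeasurableSpace F] [BorelSpace F]
    (hf : MemQ0 f) (T : OrthogonalSplitting F (Eucl m) (Eucl n)) :
    probMeasure (T.marginal f) = (probMeasure f).map fun x => (T.join.symm x).2 := by
  have hg := hf.marginal T
  have := hf.isProbabilityMeasure
  have := hg.isProbabilityMeasure
  have hsnd : Measurable fun x => (T.join.symm x).2 := by fun_prop
  ext s hs
  rw [Measure.map_apply hsnd hs, ← measureReal_eq_measureReal_iff,
    ← integral_indicator_one hs, ← integral_indicator_one (hsnd hs), hg.integral_probMeasure,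
    hf.integral_probMeasure, T.integral_marginal hf.2.2.2.1]
  congr 1
  refine T.integral_marginal_mul (fun p => ?_) ?_
  · exact congrArg (fun q => s.indicator (1 : Eucl m → ℝ) q.2) (T.join.symm_apply_apply p)
  · refine (hf.2.2.2.1.indicator (hsnd hs)).congr (ae_of_all _ fun x => ?_)
    simp only [Set.indicator, Pi.one_apply, mul_ite, mul_one, mul_zero]

theorem MemQ0.covMatrix_marginal_apply {m : ℕ} {F : Type*} [NormedAddCommGroup F]
    [InnerProductSpace ℝ F] [FiniteDimensional ℝ F] [MeasurableSpace F] [BorelSpace F]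
    (hf : MemQ0 f) (T : OrthogonalSplitting F (Eucl m) (Eucl n)) (a a' : Fin m) :
    covMatrix (T.marginal f) a a' =
      (T.join (0, EuclideanSpace.single a 1)).ofLp ⬝ᵥ
        (covMatrix f).mulVec (T.join (0, EuclideanSpace.single a' 1)).ofLp := by
  have := hf.isProbabilityMeasure
  let π : Eucl n →L[ℝ] Eucl m := ContinuousLinearMap.snd ℝ F (Eucl m) ∘L T.join.symm
  have hadjoint (z : Eucl m) : π.adjoint z = T.join (0, z) := ext_inner_right ℝ fun x => by
    rw [ContinuousLinearMap.adjoint_inner_left, T.inner_join_snd]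
    rfl
  have hentry := (hf.marginal T).covarianceBilin_probMeasure
    (EuclideanSpace.single a 1) (EuclideanSpace.single a' 1)
  rw [hf.probMeasure_marginal T] at hentry
  rw [← hf.covarianceBilin_probMeasure, ← hadjoint, ← hadjoint,
    ← covarianceBilin_map hf.memLp_id_probMeasure]
  refine Eq.trans ?_ hentry.symm
  simp

theorem MemQ0.covMatrix_marginal_eigenvectorBasis {κ : Type*} [Fintype κ] {m : ℕ} (hf : MemQ0 f)
    (e : κ ⊕ Fin m ≃ Fin n) :
    covMatrix ((OrthogonalSplitting.ofBasis (isHermitian_covMatrix f).eigenvectorBasis e).marginal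
      f) = Matrix.diagonal fun a => (isHermitian_covMatrix f).eigenvalues (e (Sum.inr a)) := by
  ext a a'
  set b := (isHermitian_covMatrix f).eigenvectorBasis
  have horthonormal : (b (e (Sum.inr a))).ofLp ⬝ᵥ (b (e (Sum.inr a'))).ofLp =
      if a = a' then 1 else 0 := by
    have hinner := b.inner_eq_ite (e (Sum.inr a')) (e (Sum.inr a))
    simpa [EuclideanSpace.inner_eq_star_dotProduct, eq_comm] using hinner
  rw [hf.covMatrix_marginal_apply, OrthogonalSplitting.ofBasis_join_single_right,
    OrthogonalSplitting.ofBasis_join_single_right, Matrix.IsHermitian.mulVec_eigenvectorBasis,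
    dotProduct_smul, horthonormal, Matrix.diagonal_apply]
  split_ifs with h <;> simp [h]

end Covariance

section IsotropicConstant

variable {d n : ℕ}

theorem MemQ0.le_supNorm {g : Eucl d → ℝ} (hg : MemQ0 g) (x : Eucl d) : g x ≤ supNorm g :=
  le_ciSup hg.bddAbove x

theorem MemQ0.supNorm_pos {g : Eucl d → ℝ} (hg : MemQ0 g) : 0 < supNorm g := by
  obtain ⟨x, hx, -⟩ := hg.exists_forall_le
  exact hx.trans_le (hg.le_supNorm x)

theorem MemQ0.isoConst_pos {g : Eucl d → ℝ} (hg : MemQ0 g) : 0 < isoConst g :=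
  mul_pos (Real.rpow_pos_of_pos (div_pos hg.supNorm_pos hg.2.2.2.2) _)
    (Real.rpow_pos_of_pos hg.posDef_covMatrix.det_pos _)

theorem MemQ0.isoConst_pow {g : Eucl d → ℝ} (hg : MemQ0 g) (hd : d ≠ 0) :
    isoConst g ^ d = supNorm g / (∫ x, g x) * √(covMatrix g).det := by
  have hd' : (d : ℝ) ≠ 0 := Nat.cast_ne_zero.mpr hd
  rw [isoConst, mul_pow, ← Real.rpow_mul_natCast (div_pos hg.supNorm_pos hg.2.2.2.2).le,
    ← Real.rpow_mul_natCast hg.posDef_covMatrix.det_pos.le, one_div_mul_cancel hd', Real.rpow_one,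
    Real.sqrt_eq_rpow]
  congr 2
  field_simp

theorem MemQ0.sectL1_base_mul_sqrt_det_le {F : Type*} [NormedAddCommGroup F]
    [InnerProductSpace ℝ F] [FiniteDimensional ℝ F] [MeasurableSpace F] [BorelSpace F]
    {f : Eucl n → ℝ} (hf : MemQ0 f) (hd : d ≠ 0) (T : OrthogonalSplitting F (Eucl d) (Eucl n)) :
    sectL1 f T.base * √(covMatrix (T.marginal f)).det ≤
      isoConst (T.marginal f) ^ d * ∫ x, f x := by
  have hmass : 0 < ∫ x, f x := hf.2.2.2.2
  rw [sectL1_base, (hf.marginal T).isoConst_pow hd, T.integral_marginal hf.2.2.2.1,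
    mul_right_comm, div_mul_cancel₀ _ hmass.ne']
  gcongr
  exact (hf.marginal T).le_supNorm 0

end IsotropicConstant

section LoomisWhitney

variable {ι κ σ τ E : Type*} [Fintype ι] [Fintype κ] [Fintype σ] [Fintype τ]
  [NormedAddCommGroup E] [InnerProductSpace ℝ E]

theorem prod_ofReal_rpow_one_div {t : ℝ} (ht : 0 ≤ t) (k : ℕ) :
    ∏ _j : τ, ENNReal.ofReal t ^ (1 / (k : ℝ)) =
      ENNReal.ofReal (t ^ ((Fintype.card τ : ℝ) / k)) := by
  rw [Finset.prod_const, Finset.card_univ, ← ENNReal.rpow_mul_natCast,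
    ENNReal.ofReal_rpow_of_nonneg ht (by positivity), one_div_mul_eq_div]

theorem ofReal_rpow_le_prod_ofReal_projection_rpow {F G : Type*} [NormedAddCommGroup F]
    [InnerProductSpace ℝ F] [NormedAddCommGroup G] [InnerProductSpace ℝ G]
    (T : τ → OrthogonalSplitting F G E) {f : E → ℝ} (hf : ∀ x, 0 ≤ f x)
    (hbdd : BddAbove (Set.range f)) (k : ℕ) (x : E) :
    ENNReal.ofReal (f x ^ ((Fintype.card τ : ℝ) / k)) ≤
      ∏ j, ENNReal.ofReal ((T j).projection f ((T j).join.symm x).1) ^ (1 / (k : ℝ)) := by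
  rw [← prod_ofReal_rpow_one_div (hf x)]
  exact Finset.prod_le_prod' fun j _ => ENNReal.rpow_le_rpow
    (ENNReal.ofReal_le_ofReal ((T j).le_projection hbdd x)) (by positivity)

variable [FiniteDimensional ℝ E] [MeasurableSpace E] [BorelSpace E]

theorem lintegral_ofReal_rpow_le_prod_lintegral_projection [DecidableEq ι]
    (b : OrthonormalBasis ι ℝ E) {e : τ → κ ⊕ σ ≃ ι} {k : ℕ} (hk : k ≠ 0)
    (hcover : ∀ i, Finset.card {j | i ∈ Finset.univ.image (e j ∘ Sum.inl)} = k) {f : E → ℝ}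
    (hf : ∀ x, 0 ≤ f x) (husc : UpperSemicontinuous f) (hbdd : BddAbove (Set.range f)) :
    ∫⁻ x, ENNReal.ofReal (f x ^ ((Fintype.card τ : ℝ) / k)) ≤
      ∏ j, (∫⁻ y, ENNReal.ofReal ((OrthogonalSplitting.ofBasis b (e j)).projection f y)) ^
        (1 / (k : ℝ)) := by
  let T j := OrthogonalSplitting.ofBasis b (e j)
  let g j (w : κ → ℝ) := ENNReal.ofReal ((T j).projection f (WithLp.toLp 2 w))
  have hcoord := b.measurePreserving_repr_symm.comp (PiLp.volume_preserving_toLp ι)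
  have hproj j : Measurable fun y => ENNReal.ofReal ((T j).projection f y) :=
    ((T j).measurable_projection husc hbdd).ennreal_ofReal
  have hrestrict j (v : ι → ℝ) :
      ((T j).join.symm (b.repr.symm (WithLp.toLp 2 v))).1 =
        WithLp.toLp 2 (v ∘ (e j ∘ Sum.inl)) := by
    ext a
    rw [OrthogonalSplitting.ofBasis_join_symm_fst_apply, b.repr.apply_symm_apply]
    rfl
  have hpointwise (v : ι → ℝ) :
      ENNReal.ofReal (f (b.repr.symm (WithLp.toLp 2 v)) ^ ((Fintype.card τ : ℝ) / k)) ≤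
        ∏ j, g j (v ∘ (e j ∘ Sum.inl)) ^ (1 / (k : ℝ)) := by
    simpa only [hrestrict] using ofReal_rpow_le_prod_ofReal_projection_rpow T hf hbdd k
      (b.repr.symm (WithLp.toLp 2 v))
  have hmeas : Measurable fun x => ENNReal.ofReal (f x ^ ((Fintype.card τ : ℝ) / k)) :=
    (husc.measurable.pow_const _).ennreal_ofReal
  calc ∫⁻ x, ENNReal.ofReal (f x ^ ((Fintype.card τ : ℝ) / k))
      ≤ ∫⁻ v, ∏ j, g j (v ∘ (e j ∘ Sum.inl)) ^ (1 / (k : ℝ)) :=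
        (hcoord.lintegral_comp hmeas).symm.trans_le (lintegral_mono hpointwise)
    _ ≤ ∏ j, (∫⁻ w, g j w) ^ (1 / (k : ℝ)) :=
        lintegral_prod_comp_rpow_le (fun j => (e j).injective.comp Sum.inl_injective)
          (fun j => (hproj j).comp (PiLp.volume_preserving_toLp κ).measurable)
          (fun _ => by positivity) fun i => by
            rw [Finset.sum_const, hcover, nsmul_eq_mul,
              mul_one_div_cancel (Nat.cast_ne_zero.mpr hk)]
    _ = ∏ j, (∫⁻ y, ENNReal.ofReal ((T j).projection f y)) ^ (1 / (k : ℝ)) :=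
        Finset.prod_congr rfl fun j _ => congrArg (· ^ (1 / (k : ℝ)))
          ((PiLp.volume_preserving_toLp κ).lintegral_comp (hproj j))

theorem integral_rpow_le_prod_integral_projection [DecidableEq ι]
    (b : OrthonormalBasis ι ℝ E) {e : τ → κ ⊕ σ ≃ ι} {k : ℕ} (hk : k ≠ 0)
    (hcover : ∀ i, Finset.card {j | i ∈ Finset.univ.image (e j ∘ Sum.inl)} = k) {f : E → ℝ}
    (hf : ∀ x, 0 ≤ f x) (husc : UpperSemicontinuous f) (hbdd : BddAbove (Set.range f))
    (hint : ∀ j, Integrable ((OrthogonalSplitting.ofBasis b (e j)).projection f)) :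
    ∫ x, f x ^ ((Fintype.card τ : ℝ) / k) ≤
      ∏ j, (∫ y, (OrthogonalSplitting.ofBasis b (e j)).projection f y) ^ (1 / (k : ℝ)) := by
  let T j := OrthogonalSplitting.ofBasis b (e j)
  have hnonneg j (y) : 0 ≤ (T j).projection f y := (T j).projection_nonneg hf y
  have hroot j : 0 ≤ (∫ y, (T j).projection f y) ^ (1 / (k : ℝ)) :=
    Real.rpow_nonneg (integral_nonneg (hnonneg j)) _
  rw [integral_eq_lintegral_of_nonneg_ae (ae_of_all _ fun x => Real.rpow_nonneg (hf x) _)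
    (husc.measurable.pow_const _).aestronglyMeasurable]
  refine ENNReal.toReal_le_of_le_ofReal (Finset.prod_nonneg fun j _ => hroot j) ?_
  refine (lintegral_ofReal_rpow_le_prod_lintegral_projection b hk hcover hf husc hbdd).trans_eq ?_
  rw [ENNReal.ofReal_prod_of_nonneg fun j _ => hroot j]
  refine Finset.prod_congr rfl fun j _ => ?_
  rw [← ENNReal.ofReal_rpow_of_nonneg (integral_nonneg (hnonneg j)) (by positivity),
    ofReal_integral_eq_lintegral_ofReal (hint j) (ae_of_all _ (hnonneg j))]

end LoomisWhitney

section CyclicBlocks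

variable (k m : ℕ) [NeZero (k + m)]

/-- The partition of the cyclic group of order `k + m` into the block of `k` consecutive elements
starting at `j` and the complementary block. -/
def cyclicBlocks (j : Fin (k + m)) : Fin k ⊕ Fin m ≃ Fin (k + m) :=
  finSumFinEquiv.trans (Equiv.addRight j)

theorem card_mem_cyclicBlocks_inl (i : Fin (k + m)) :
    Finset.card {j | i ∈ Finset.univ.image (cyclicBlocks k m j ∘ Sum.inl)} = k := by
  have hstarts : ({j | i ∈ Finset.univ.image (cyclicBlocks k m j ∘ Sum.inl)} : Finset _) =
      Finset.univ.image fun a : Fin k => i - Fin.castAdd m a := by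
    ext j
    simp [cyclicBlocks, sub_eq_iff_eq_add', eq_comm (a := i)]
  rw [hstarts, Finset.card_image_of_injective, Finset.card_univ, Fintype.card_fin]
  exact sub_right_injective.comp (Fin.castAdd_injective k m)

theorem prod_prod_cyclicBlocks_inr {R : Type*} [CommMonoid R] (l : Fin (k + m) → R) :
    ∏ j, ∏ a, l (cyclicBlocks k m j (Sum.inr a)) = (∏ i, l i) ^ m := by
  have htranslate (a : Fin m) : ∏ j, l (cyclicBlocks k m j (Sum.inr a)) = ∏ i, l i :=
    Fintype.prod_equiv (Equiv.addLeft (Fin.natAdd k a)) _ _ fun j => by simp [cyclicBlocks]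
  rw [Finset.prod_comm, Finset.prod_congr rfl fun a _ => htranslate a, Finset.prod_const,
    Finset.card_univ, Fintype.card_fin]

end CyclicBlocks

section Milman

variable {k m n : ℕ}

theorem projL1_nonneg {f : Eucl n → ℝ} (hf : ∀ x, 0 ≤ f x) (H : Submodule ℝ (Eucl n)) :
    0 ≤ projL1 f H :=
  integral_nonneg fun _ => Real.iSup_nonneg fun _ => hf _

theorem MemQ0.integrable_iSup_orthogonal {f : Eucl n → ℝ} (hf : MemQ0 f)
    (H : Submodule ℝ (Eucl n)) : Integrable fun y : H => ⨆ z : Hᗮ, f (y + z) := by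
  let T : OrthogonalSplitting H Hᗮ (Eucl n) := H.orthogonalDecomposition.symm
  have hjoin (p : H × Hᗮ) : T.join p = p.1 + p.2 := by
    simp [T, OrthogonalSplitting.join]
  have hint := hf.integrable_projection T
  unfold OrthogonalSplitting.projection at hint
  simpa only [hjoin] using hint

section

variable [NeZero (k + m)]

theorem lpNorm_le_prod_projL1 (hk : k ≠ 0) (b : OrthonormalBasis (Fin (k + m)) ℝ (Eucl (k + m)))
    {f : Eucl (k + m) → ℝ} (hf : ∀ x, 0 ≤ f x) (husc : UpperSemicontinuous f)
    (hbdd : BddAbove (Set.range f))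
    (hint : ∀ H : Submodule ℝ (Eucl (k + m)), Module.finrank ℝ H = k →
      Integrable fun y : H => ⨆ z : Hᗮ, f (y + z)) :
    _root_.lpNorm (((k + m : ℕ) : ℝ) / k) f ≤
      (∏ j, projL1 f (OrthogonalSplitting.ofBasis b (cyclicBlocks k m j)).base) ^
        (1 / ((k + m : ℕ) : ℝ)) := by
  have hk' : (k : ℝ) ≠ 0 := Nat.cast_ne_zero.mpr hk
  let T j := OrthogonalSplitting.ofBasis b (cyclicBlocks k m j)
  have hprojection j : Integrable ((T j).projection f) := by
    have hbase := hint (T j).base ((T j).finrank_base.trans finrank_euclideanSpace_fin)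
    rw [funext ((T j).projection_eq_iSup_orthogonal f)]
    exact (T j).inl.equivRange.measurePreserving.integrable_comp_of_integrable hbase
  have hlw := integral_rpow_le_prod_integral_projection b hk (card_mem_cyclicBlocks_inl k m) hf husc
    hbdd hprojection
  simp only [← projL1_base, Fintype.card_fin] at hlw
  rw [Real.finsetProd_rpow _ _ fun j _ => projL1_nonneg hf _] at hlw
  calc _root_.lpNorm (((k + m : ℕ) : ℝ) / k) f
      ≤ ((∏ j, projL1 f (T j).base) ^ (1 / (k : ℝ))) ^ (1 / (((k + m : ℕ) : ℝ) / k)) :=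
        Real.rpow_le_rpow (integral_nonneg fun x => Real.rpow_nonneg (hf x) _) hlw (by positivity)
    _ = (∏ j, projL1 f (T j).base) ^ (1 / ((k + m : ℕ) : ℝ)) := by
        rw [← Real.rpow_mul (Finset.prod_nonneg fun j _ => projL1_nonneg hf _), one_div_div,
          one_div_mul_eq_div, div_div_cancel_left' hk', one_div]

/-- The splitting of `ℝ^(k + m)` along principal axes of `f`, the eigenvectors of its covariance
matrix: those with index in the `j`-th cyclic block span the first summand. -/
abbrev principalSplitting (f : Eucl (k + m) → ℝ) (j : Fin (k + m)) :
    OrthogonalSplitting (Eucl k) (Eucl m) (Eucl (k + m)) :=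
  .ofBasis (isHermitian_covMatrix f).eigenvectorBasis (cyclicBlocks k m j)

theorem MemQ0.prod_sqrt_det_covMatrix_marginal {f : Eucl (k + m) → ℝ} (hf : MemQ0 f) :
    ∏ j, √(covMatrix ((principalSplitting f j).marginal f)).det = √(covMatrix f).det ^ m := by
  let l := (isHermitian_covMatrix f).eigenvalues
  have hl i : 0 ≤ l i := (hf.posDef_covMatrix.eigenvalues_pos i).le
  have hdet : √(covMatrix f).det = ∏ i, √(l i) := by
    rw [(isHermitian_covMatrix f).det_eq_prod_eigenvalues, ← Real.sqrt_prod _ fun i _ => hl i]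
    rfl
  have hdet_marginal j : √(covMatrix ((principalSplitting f j).marginal f)).det =
      ∏ a, √(l (cyclicBlocks k m j (Sum.inr a))) := by
    rw [hf.covMatrix_marginal_eigenvectorBasis, Matrix.det_diagonal,
      Real.sqrt_prod _ fun a _ => hl _]
  simp only [hdet_marginal, hdet, prod_prod_cyclicBlocks_inr k m fun i => √(l i)]

theorem MemQ0.prod_sectL1_mul_sqrt_det_le (hm : m ≠ 0) {f : Eucl (k + m) → ℝ} (hf : MemQ0 f)
    {M : ℝ} (hM : ∀ g : Eucl m → ℝ, MemQ0 g → isoConst g ≤ M) :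
    (∏ j, sectL1 f (principalSplitting f j).base) * √(covMatrix f).det ^ m ≤
      (M ^ m * ∫ x, f x) ^ (k + m) := by
  have hmass : 0 < ∫ x, f x := hf.2.2.2.2
  have hsect j : sectL1 f (principalSplitting f j).base *
      √(covMatrix ((principalSplitting f j).marginal f)).det ≤ M ^ m * ∫ x, f x := by
    refine (hf.sectL1_base_mul_sqrt_det_le hm _).trans ?_
    gcongr
    · exact (hf.marginal _).isoConst_pos.le
    · exact hM _ (hf.marginal _)
  rw [← hf.prod_sqrt_det_covMatrix_marginal, ← Finset.prod_mul_distrib]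
  refine (Finset.prod_le_prod (fun j _ => mul_nonneg (integral_nonneg fun _ => hf.1 _)
    (Real.sqrt_nonneg _)) fun j _ => hsect j).trans_eq ?_
  rw [Finset.prod_const, Finset.card_univ, Fintype.card_fin]

theorem MemQ0.prod_sectL1_le (hm : m ≠ 0) {f : Eucl (k + m) → ℝ} (hf : MemQ0 f) {M : ℝ}
    (hM : ∀ g : Eucl m → ℝ, MemQ0 g → isoConst g ≤ M) :
    ∏ j, sectL1 f (principalSplitting f j).base ≤
      ((M / isoConst f) ^ m) ^ (k + m) * ((∫ x, f x) ^ k * supNorm f ^ m) := by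
  have hmass : 0 < ∫ x, f x := hf.2.2.2.2
  have hsup : 0 < supNorm f := hf.supNorm_pos
  have hiso : 0 < isoConst f := hf.isoConst_pos
  have hsqrt : √(covMatrix f).det = isoConst f ^ (k + m) * (∫ x, f x) / supNorm f := by
    rw [hf.isoConst_pow (by omega)]
    field_simp
  have hprod := hf.prod_sectL1_mul_sqrt_det_le hm hM
  rw [← le_div_iff₀ (pow_pos (Real.sqrt_pos.mpr hf.posDef_covMatrix.det_pos) m), hsqrt] at hprod
  refine hprod.trans_eq ?_
  rw [div_pow, div_pow, mul_pow, mul_pow, div_pow, pow_add (∫ x, f x),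
    pow_right_comm (isoConst f)]
  field_simp

end

theorem pow_mul_pow_mul_pow_rpow_one_div {A B C : ℝ} (hA : 0 ≤ A) (hB : 0 ≤ B) (hC : 0 ≤ C)
    {N : ℕ} (hN : N ≠ 0) (k m : ℕ) :
    (A ^ N * (B ^ k * C ^ m)) ^ (1 / (N : ℝ)) =
      A * (B ^ ((k : ℝ) / N) * C ^ ((m : ℝ) / N)) := by
  rw [Real.mul_rpow (by positivity) (by positivity), Real.mul_rpow (by positivity) (by positivity),
    ← Real.rpow_natCast_mul hB, ← Real.rpow_natCast_mul hC, mul_one_div, mul_one_div, one_div,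
    Real.pow_rpow_inv_natCast hA hN]

theorem functional_milman_isotropic_general (n k : ℕ) (hk : 0 < k) (hkn : k < n)
    (f₁ f₂ : Eucl n → ℝ) (hf₁ : ∀ x, 0 ≤ f₁ x) (husc : UpperSemicontinuous f₁)
    (hbdd : BddAbove (Set.range f₁))
    (hint : ∀ H : Submodule ℝ (Eucl n), Module.finrank ℝ H = k →
      Integrable fun y : H => ⨆ z : Hᗮ, f₁ (y + z))
    (hf₂ : MemQ0 f₂)
    (hcond : ∀ H : Submodule ℝ (Eucl n), Module.finrank ℝ H = k → projL1 f₁ H ≤ sectL1 f₂ H)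
    (M : ℝ) (hbound : ∀ g : Eucl (n - k) → ℝ, MemQ0 g → isoConst g ≤ M) :
    lpNorm ((n : ℝ) / k) f₁ ≤
      (M / isoConst f₂) ^ (n - k) *
        ((∫ x, f₂ x) ^ ((k : ℝ) / n) * supNorm f₂ ^ (((n : ℝ) - k) / n)) := by
  obtain ⟨m, rfl⟩ := Nat.exists_eq_add_of_le hkn.le
  rw [Nat.add_sub_cancel_left] at hbound ⊢
  have : NeZero (k + m) := ⟨by omega⟩
  let H j := (principalSplitting f₂ j).base
  have hM : 0 ≤ M :=
    (hf₂.marginal (principalSplitting f₂ 0)).isoConst_pos.le.trans (hbound _ (hf₂.marginal _))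
  have hiso : 0 < isoConst f₂ := hf₂.isoConst_pos
  have hmilman j : projL1 f₁ (H j) ≤ sectL1 f₂ (H j) :=
    hcond _ ((OrthogonalSplitting.finrank_base _).trans finrank_euclideanSpace_fin)
  calc _root_.lpNorm (((k + m : ℕ) : ℝ) / k) f₁
      ≤ (∏ j, projL1 f₁ (H j)) ^ (1 / ((k + m : ℕ) : ℝ)) :=
        lpNorm_le_prod_projL1 hk.ne' _ hf₁ husc hbdd hint
    _ ≤ (((M / isoConst f₂) ^ m) ^ (k + m) * ((∫ x, f₂ x) ^ k * supNorm f₂ ^ m)) ^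
          (1 / ((k + m : ℕ) : ℝ)) := by
        gcongr
        · exact Finset.prod_nonneg fun j _ => projL1_nonneg hf₁ (H j)
        · refine (Finset.prod_le_prod (fun j _ => projL1_nonneg hf₁ (H j))
            fun j _ => hmilman j).trans (hf₂.prod_sectL1_le (by omega) hbound)
    _ = (M / isoConst f₂) ^ m * ((∫ x, f₂ x) ^ ((k : ℝ) / (k + m : ℕ)) *
          supNorm f₂ ^ ((((k + m : ℕ) : ℝ) - k) / (k + m : ℕ))) := by
        rw [pow_mul_pow_mul_pow_rpow_one_div (by positivity) hf₂.2.2.2.2.le hf₂.supNorm_pos.le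
          (NeZero.ne _), Nat.cast_add, add_sub_cancel_left]

end Milman

/-- **The functional Milman problem with isotropic constants** (Theorem 6.2):
if `f₁, f₂ ∈ Q₀ⁿ` satisfy the Milman condition for `k`-dimensional subspaces,
`f₂` is centered, and `L_g ≤ M` for all `g ∈ Q₀^{n−k}`, then
`‖f₁‖_{n/k} ≤ (M/L_{f₂})^{n−k}·‖f₂‖₁^{k/n}·‖f₂‖_∞^{(n−k)/n}`. -/
theorem functional_milman_isotropic (n k : ℕ) (hn : 2 ≤ n) (hk1 : 1 ≤ k)
    (hk2 : k ≤ n - 1)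
    (f₁ f₂ : Eucl n → ℝ) (hf₁ : MemQ0 f₁) (hf₂ : MemQ0 f₂)
    (hcond : ∀ H : Submodule ℝ (Eucl n), Module.finrank ℝ H = k →
      projL1 f₁ H ≤ sectL1 f₂ H)
    (hcentered : ∀ i : Fin n, (∫ x, f₂ x * x i) = 0)
    (M : ℝ) (hM : 0 < M)
    (hbound : ∀ g : Eucl (n - k) → ℝ, MemQ0 g → isoConst g ≤ M) :
    lpNorm ((n : ℝ) / k) f₁ ≤
      (M / isoConst f₂) ^ (n - k) *
        ((∫ x, f₂ x) ^ ((k : ℝ) / n) * supNorm f₂ ^ (((n : ℝ) - k) / n)) :=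
  functional_milman_isotropic_general n k hk1 (by omega) f₁ f₂ hf₁.1 hf₁.2.2.1 hf₁.bddAbove
    (fun H _ => hf₁.integrable_iSup_orthogonal H) hf₂ hcond M hbound
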